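/- arXiv:1101.0013 — 2 statements merged into one kernel-verified Lean document; each statement's English description precedes it below -/
import Mathlib

section
/- Let n ≥ 2 and 0 < σ < 1, and let ω(X) = t^{1−2σ} for X = (x,t), t > 0. Let U ∈ C¹(Q₁ ∪ ∂'Q₁) be a nonnegative weak supersolution in Q₁ (for every nonnegative φ ∈ C¹ with compact support in Q₁ ∪ ∂'Q₁: −∫_{Q₁} t^{1−2σ} ∇U·∇φ dX + ∫_{B₁}(a(x)U(x,0)+b(x))φ(x,0) dx ≤ 0), with a, b bounded measurable on B₁, and with ∫_{Q₁} t^{1−2σ}(U² + |∇U|²) dX < ∞. Let k > 0 satisfy k ≥ ‖b‖_{L^∞(B₁)} and set W = log(U + k). Then there is C > 0 depending only on n, σ and ‖a‖_{L^∞(B₁)} such that for every y ∈ B₁ and r > 0 with B_{2r}(y) × (0,2r) ⊂ Q₁, writing Q_r(y) = B_r(y) × (0,r), ω(Q_r(y)) = ∫_{Q_r(y)} ω dX, and W_{y,r} = ω(Q_r(y))^{−1} ∫_{Q_r(y)} W ω dX, one has ω(Q_r(y))^{−1} ∫_{Q_r(y)} |W − W_{y,r}| ω dX ≤ C. That is,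 W has bounded mean oscillation with respect to the weight t^{1−2σ} over such boxes. -/
open MeasureTheory Metric Set Real

noncomputable section

/-- Points of `ℝ^{n+1}` written as `X = (x, t)` with `x ∈ ℝⁿ`, `t ∈ ℝ`. -/
abbrev Pt (n : ℕ) := EuclideanSpace ℝ (Fin n) × ℝ

/-- The box `Q_R = B_R × (0, R) ⊂ ℝ^{n+1}`. -/
def Q (n : ℕ) (R : ℝ) : Set (Pt n) :=
  (ball (0 : EuclideanSpace ℝ (Fin n)) R) ×ˢ (Ioo (0 : ℝ) R)

/-- The bottom boundary `∂'Q_R = B_R × {0}`. -/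
def Q' (n : ℕ) (R : ℝ) : Set (Pt n) :=
  (ball (0 : EuclideanSpace ℝ (Fin n)) R) ×ˢ ({(0 : ℝ)} : Set ℝ)

/-- The inner product `∇U · ∇φ` of the gradients of `U, φ : ℝⁿ × ℝ → ℝ` at `X`,
computed in the standard orthonormal basis of `ℝⁿ × ℝ`. -/
def gradDot (n : ℕ) (U φ : Pt n → ℝ) (X : Pt n) : ℝ :=
  (∑ i : Fin n,
      fderiv ℝ U X ((EuclideanSpace.single i (1 : ℝ)), (0 : ℝ)) *
        fderiv ℝ φ X ((EuclideanSpace.single i (1 : ℝ)), (0 : ℝ)))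
    + fderiv ℝ U X ((0 : EuclideanSpace ℝ (Fin n)), (1 : ℝ)) *
        fderiv ℝ φ X ((0 : EuclideanSpace ℝ (Fin n)), (1 : ℝ))

/-- `U` is a weak subsolution of `div(t^{1−2σ}∇U) ≥ 0` in `Q₁`,
`−lim_{t→0⁺} t^{1−2σ}∂ₜU ≤ aU + b` on `∂'Q₁`: for every nonnegative `C¹` test
function `φ` compactly supported in `Q₁ ∪ ∂'Q₁`,
`−∫_{Q₁} t^{1−2σ} ∇U·∇φ + ∫_{B₁} (aU(x,0)+b)φ(x,0) ≥ 0`. -/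
def IsWeakSubsol (n : ℕ) (σ : ℝ) (U : Pt n → ℝ)
    (a b : EuclideanSpace ℝ (Fin n) → ℝ) : Prop :=
  ∀ φ : Pt n → ℝ, ContDiff ℝ 1 φ → HasCompactSupport φ →
    tsupport φ ⊆ Q n 1 ∪ Q' n 1 → (∀ X, 0 ≤ φ X) →
    0 ≤ -(∫ X in Q n 1, X.2 ^ (1 - 2 * σ) * gradDot n U φ X)
        + ∫ x in ball (0 : EuclideanSpace ℝ (Fin n)) 1,
            (a x * U (x, 0) + b x) * φ (x, 0)

/-- `U` is a weak supersolution of `div(t^{1−2σ}∇U) ≤ 0` in `Q₁`,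
`−lim_{t→0⁺} t^{1−2σ}∂ₜU ≥ aU + b` on `∂'Q₁`: for every nonnegative `C¹` test
function `φ` compactly supported in `Q₁ ∪ ∂'Q₁`,
`−∫_{Q₁} t^{1−2σ} ∇U·∇φ + ∫_{B₁} (aU(x,0)+b)φ(x,0) ≤ 0`. -/
def IsWeakSupersol (n : ℕ) (σ : ℝ) (U : Pt n → ℝ)
    (a b : EuclideanSpace ℝ (Fin n) → ℝ) : Prop :=
  ∀ φ : Pt n → ℝ, ContDiff ℝ 1 φ → HasCompactSupport φ →
    tsupport φ ⊆ Q n 1 ∪ Q' n 1 → (∀ X, 0 ≤ φ X) →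
    -(∫ X in Q n 1, X.2 ^ (1 - 2 * σ) * gradDot n U φ X)
        + ∫ x in ball (0 : EuclideanSpace ℝ (Fin n)) 1,
            (a x * U (x, 0) + b x) * φ (x, 0) ≤ 0

/-!
Put `P = U + k` and `W = log P`. Testing the equation with `ζ / P` gives the Caccioppoli
inequality `∫ ζ |∇W|² ω ≲ ω(supp ζ)` for every cutoff `ζ ≥ 0` with `|∇ζ|² ≲ ζ`. Choosing
`ζ = max(t - ε, 0)² ψ²`, which vanishes near `t = 0` so that the boundary condition never enters,
and letting `ε → 0` yields `∫_{Q_r(y)} t² |∇W|² ω ≲ ω(Q_r(y))`. On the other side, the oscillation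
of `W` in mean is controlled by `∫_{Q_r(y)} t |∇W| ω`: integrating vertically up to a slice `t = T`
with `T ∈ (r/2, r)` gains a power of `t` by Hardy's inequality, and the Poincaré inequality on
`B_r(y) × (r/2, r)` provides a slice on which `W` is close to a constant. The two estimates meet
through `t |∇W| ≤ 1 + t² |∇W|²`.
-/

open scoped ENNReal Topology

section Segments

variable {F G : Type*} [NormedAddCommGroup F] [NormedSpace ℝ F] [NormedAddCommGroup G]
  [NormedSpace ℝ G]

theorem enorm_sub_le_lintegral_fderiv_line {S : Set F} (hS : IsOpen S) {V : F → G}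
    (hV : ContDiffOn ℝ 1 V S) (p v : F) {a b : ℝ} (hab : a ≤ b)
    (hmem : ∀ τ ∈ Icc a b, p + τ • v ∈ S) :
    ‖V (p + b • v) - V (p + a • v)‖ₑ ≤
      ∫⁻ τ in Icc a b, ‖fderiv ℝ V (p + τ • v)‖ₑ * ‖v‖ₑ := by
  have hline (τ : ℝ) : HasDerivAt (fun τ : ℝ => p + τ • v) v τ := by
    simpa using ((hasDerivAt_id τ).smul_const v).const_add p
  have hline_smooth : ContDiff ℝ 1 fun τ : ℝ => p + τ • v := by fun_prop
  refine (enorm_sub_le_lintegral_deriv_of_contDiffOn_Icc (f := fun τ : ℝ => V (p + τ • v))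
    (hV.comp hline_smooth.contDiffOn hmem) hab).trans
    (setLIntegral_mono' measurableSet_Icc fun τ hτ => ?_)
  have hVτ : DifferentiableAt ℝ V (p + τ • v) :=
    (hV.contDiffAt (hS.mem_nhds (hmem τ hτ))).differentiableAt one_ne_zero
  have hderiv : deriv (fun τ : ℝ => V (p + τ • v)) τ = fderiv ℝ V (p + τ • v) v :=
    (hVτ.hasFDerivAt.comp_hasDerivAt τ (hline τ)).deriv
  rw [hderiv]
  exact ContinuousLinearMap.le_opENorm _ _

theorem enorm_sub_le_lintegral_fderiv_vertical {S : Set (F × ℝ)} (hS : IsOpen S) {W : F × ℝ → G}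
    (hW : ContDiffOn ℝ 1 W S) {x : F} {s t : ℝ} (hmem : ∀ τ ∈ uIcc s t, (x, τ) ∈ S) :
    ‖W (x, s) - W (x, t)‖ₑ ≤ ∫⁻ τ in uIcc s t, ‖fderiv ℝ W (x, τ)‖ₑ := by
  wlog hst : s ≤ t generalizing s t
  · rw [uIcc_comm, enorm_sub_rev]
    exact this (by rwa [uIcc_comm]) (le_of_not_ge hst)
  rw [uIcc_of_le hst] at hmem ⊢
  have hline (τ : ℝ) : ((x, 0) : F × ℝ) + τ • (0, 1) = (x, τ) := by simp
  have hnorm : ‖((0, 1) : F × ℝ)‖ₑ = 1 := by simp [enorm, Prod.nnnorm_def]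
  simpa only [hline, hnorm, mul_one, enorm_sub_rev (W (x, s))] using
    enorm_sub_le_lintegral_fderiv_line hS hW (x, 0) (0, 1) hst (by simpa only [hline] using hmem)

theorem enorm_sub_le_ediam_mul_lintegral_segment {S : Set F} (hS : IsOpen S)
    (hconv : Convex ℝ S) {V : F → G} (hV : ContDiffOn ℝ 1 V S) {X Y : F} (hX : X ∈ S)
    (hY : Y ∈ S) :
    ‖V X - V Y‖ₑ ≤ ediam S * ∫⁻ θ in Icc (0 : ℝ) 1,
      S.indicator (fun X => ‖fderiv ℝ V X‖ₑ) (X + θ • (Y - X)) := by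
  have hmem : ∀ θ ∈ Icc (0 : ℝ) 1, X + θ • (Y - X) ∈ S := fun θ hθ =>
    hconv.add_smul_sub_mem hX hY hθ
  have h := enorm_sub_le_lintegral_fderiv_line hS hV X (Y - X) zero_le_one hmem
  rw [one_smul, zero_smul, add_zero, add_sub_cancel, enorm_sub_rev] at h
  calc ‖V X - V Y‖ₑ ≤ _ := h
    _ ≤ ∫⁻ θ in Icc (0 : ℝ) 1,
          S.indicator (fun X => ‖fderiv ℝ V X‖ₑ) (X + θ • (Y - X)) * ‖Y - X‖ₑ := by
        refine setLIntegral_mono' measurableSet_Icc fun θ hθ => ?_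
        rw [indicator_of_mem (hmem θ hθ)]
    _ = ‖Y - X‖ₑ * ∫⁻ θ in Icc (0 : ℝ) 1,
          S.indicator (fun X => ‖fderiv ℝ V X‖ₑ) (X + θ • (Y - X)) := by
        rw [lintegral_mul_const' _ _ enorm_ne_top, mul_comm]
    _ ≤ _ := by
        rw [← edist_eq_enorm_sub]
        gcongr
        exact edist_le_ediam_of_mem hY hX

variable [FiniteDimensional ℝ F] [MeasurableSpace F] [BorelSpace F]
  (μ : Measure F) [μ.IsAddHaarMeasure]

theorem lintegral_comp_smul_add {s : ℝ} (hs : 0 < s) (v : F) (g : F → ℝ≥0∞) :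
    ∫⁻ X, g (s • X + v) ∂μ =
      ENNReal.ofReal ((s ^ Module.finrank ℝ F)⁻¹) * ∫⁻ X, g X ∂μ := by
  have h : ∫⁻ X, g (s • X + v) ∂μ = ∫⁻ X, g (X + v) ∂(Measure.map (s • ·) μ) :=
    (lintegral_map_equiv (fun X => g (X + v))
      (Homeomorph.smulOfNeZero s hs.ne').toMeasurableEquiv).symm
  rw [h, Measure.map_addHaar_smul μ hs.ne', lintegral_smul_measure,
    lintegral_add_right_eq_self, abs_of_pos (by positivity), smul_eq_mul]

theorem lintegral_comp_smul_add_le {s : ℝ} (hs : 1 / 2 ≤ s) (v : F) (g : F → ℝ≥0∞) :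
    ∫⁻ X, g (s • X + v) ∂μ ≤ 2 ^ Module.finrank ℝ F * ∫⁻ X, g X ∂μ := by
  rw [lintegral_comp_smul_add μ (by linarith) v g]
  gcongr
  rw [← inv_pow, ENNReal.ofReal_pow (inv_nonneg.2 (by linarith))]
  gcongr
  refine ENNReal.ofReal_le_of_le_toReal ?_
  simpa using inv_anti₀ (by norm_num) hs

/-- Of the two endpoints of a segment, integrate first over the one with the larger coefficient. -/
theorem lintegral_lintegral_convexComb_le {g : F → ℝ≥0∞} (hg : Measurable g) (S : Set F) {θ : ℝ} :
    ∫⁻ Y in S, ∫⁻ X in S, g (X + θ • (Y - X)) ∂μ ∂μ ≤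
      2 ^ Module.finrank ℝ F * (∫⁻ X, g X ∂μ) * μ S := by
  have hcomb (X Y : F) : X + θ • (Y - X) = (1 - θ) • X + θ • Y := by module
  rcases le_total θ (1 / 2) with hθ | hθ
  · calc ∫⁻ Y in S, ∫⁻ X in S, g (X + θ • (Y - X)) ∂μ ∂μ
        ≤ ∫⁻ _ in S, 2 ^ Module.finrank ℝ F * (∫⁻ X, g X ∂μ) ∂μ := by
          refine lintegral_mono fun Y => (setLIntegral_le_lintegral S _).trans ?_
          simpa only [hcomb] using
            lintegral_comp_smul_add_le μ (s := 1 - θ) (by linarith) (θ • Y) g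
      _ = _ := setLIntegral_const S _
  · rw [lintegral_lintegral_swap (by fun_prop)]
    calc ∫⁻ X in S, ∫⁻ Y in S, g (X + θ • (Y - X)) ∂μ ∂μ
        ≤ ∫⁻ _ in S, 2 ^ Module.finrank ℝ F * (∫⁻ X, g X ∂μ) ∂μ := by
          refine lintegral_mono fun X => (setLIntegral_le_lintegral S _).trans ?_
          simpa only [hcomb, add_comm] using lintegral_comp_smul_add_le μ hθ ((1 - θ) • X) g
      _ = _ := setLIntegral_const S _

theorem lintegral_lintegral_segment_le {g : F → ℝ≥0∞} (hg : Measurable g) {S : Set F}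
    (hS : μ S ≠ ∞) :
    ∫⁻ Y in S, ∫⁻ X in S, (∫⁻ θ in Icc (0 : ℝ) 1, g (X + θ • (Y - X))) ∂μ ∂μ ≤
      2 ^ Module.finrank ℝ F * (∫⁻ X, g X ∂μ) * μ S := by
  have : IsFiniteMeasure (μ.restrict S) := isFiniteMeasure_restrict.2 hS
  have hinner (Y : F) : ∫⁻ X in S, (∫⁻ θ in Icc (0 : ℝ) 1, g (X + θ • (Y - X))) ∂μ =
      ∫⁻ θ in Icc (0 : ℝ) 1, ∫⁻ X in S, g (X + θ • (Y - X)) ∂μ :=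
    lintegral_lintegral_swap (by fun_prop)
  simp only [hinner]
  rw [lintegral_lintegral_swap (Measurable.lintegral_prod_right'
    (f := fun q : (F × ℝ) × F => g (q.2 + q.1.2 • (q.1.1 - q.2))) (by fun_prop)).aemeasurable]
  refine (lintegral_mono fun θ => lintegral_lintegral_convexComb_le μ hg S).trans_eq ?_
  simp

theorem exists_convex_poincare [CompleteSpace G] {S : Set F} (hS : IsOpen S)
    (hconv : Convex ℝ S) (hfin : μ S ≠ ∞) {V : F → G} (hV : ContDiffOn ℝ 1 V S) :
    ∃ c, ∫⁻ X in S, ‖V X - c‖ₑ ∂μ ≤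
      2 ^ Module.finrank ℝ F * ediam S * ∫⁻ X in S, ‖fderiv ℝ V X‖ₑ ∂μ := by
  rcases eq_or_ne (μ S) 0 with h0 | h0
  · exact ⟨0, by simp [Measure.restrict_zero_set h0]⟩
  have : IsFiniteMeasure (μ.restrict S) := isFiniteMeasure_restrict.2 hfin
  set g : F → ℝ≥0∞ := S.indicator fun X => ‖fderiv ℝ V X‖ₑ
  have hg : Measurable g := (measurable_fderiv ℝ V).enorm.indicator hS.measurableSet
  have hseg : Measurable fun p : F × F => ∫⁻ θ in Icc (0 : ℝ) 1, g (p.2 + θ • (p.1 - p.2)) :=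
    Measurable.lintegral_prod_right' (f := fun q : (F × F) × ℝ =>
      g (q.1.2 + q.2 • (q.1.1 - q.1.2))) (by fun_prop)
  obtain ⟨Y, hY, hle⟩ := exists_le_setLAverage (μ := μ) (s := S) h0 hfin
    (hseg.lintegral_prod_right' (ν := μ.restrict S)).aemeasurable
  refine ⟨V Y, ?_⟩
  calc ∫⁻ X in S, ‖V X - V Y‖ₑ ∂μ
      ≤ ∫⁻ X in S, ediam S * (∫⁻ θ in Icc (0 : ℝ) 1, g (X + θ • (Y - X))) ∂μ :=
        setLIntegral_mono' hS.measurableSet fun X hX =>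
          enorm_sub_le_ediam_mul_lintegral_segment hS hconv hV hX hY
    _ = ediam S * ∫⁻ X in S, (∫⁻ θ in Icc (0 : ℝ) 1, g (X + θ • (Y - X))) ∂μ :=
        lintegral_const_mul _ (hseg.comp measurable_prodMk_left)
    _ ≤ ediam S * (2 ^ Module.finrank ℝ F * ∫⁻ X, g X ∂μ) := by
        gcongr
        refine hle.trans ?_
        rw [setLAverage_eq]
        exact ENNReal.div_le_of_le_mul (lintegral_lintegral_segment_le μ hg hfin)
    _ = _ := by
        rw [lintegral_indicator hS.measurableSet]
        ring

end Segments

section MeanOscillation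

variable {Ω G : Type*} [MeasurableSpace Ω] [NormedAddCommGroup G] [NormedSpace ℝ G]
  {μ : Measure Ω}

theorem integral_norm_sub_integral_le [IsProbabilityMeasure μ] {f : Ω → G} (hf : Integrable f μ)
    [CompleteSpace G] (c : G) : ∫ X, ‖f X - ∫ Y, f Y ∂μ‖ ∂μ ≤ 2 * ∫ X, ‖f X - c‖ ∂μ := by
  have hfc : Integrable (fun X => f X - c) μ := hf.sub (integrable_const c)
  have hmean : ‖c - ∫ Y, f Y ∂μ‖ ≤ ∫ X, ‖f X - c‖ ∂μ := by
    have h := norm_integral_le_integral_norm (μ := μ) fun X => f X - c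
    rwa [integral_sub hf (integrable_const c), integral_const, probReal_univ, one_smul,
      norm_sub_rev] at h
  calc ∫ X, ‖f X - ∫ Y, f Y ∂μ‖ ∂μ
      ≤ ∫ X, (‖f X - c‖ + ‖c - ∫ Y, f Y ∂μ‖) ∂μ :=
        integral_mono (hf.sub (integrable_const _)).norm (hfc.norm.add (integrable_const _))
          fun X => norm_sub_le_norm_sub_add_norm_sub _ _ _
    _ = ∫ X, ‖f X - c‖ ∂μ + ‖c - ∫ Y, f Y ∂μ‖ := by
        rw [integral_add hfc.norm (integrable_const _)]
        simp
    _ ≤ 2 * ∫ X, ‖f X - c‖ ∂μ := by linarith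

theorem average_norm_sub_average_le [IsFiniteMeasure μ] [NeZero μ] [CompleteSpace G] {f : Ω → G}
    (hf : Integrable f μ) (c : G) : ⨍ X, ‖f X - ⨍ Y, f Y ∂μ‖ ∂μ ≤ 2 * ⨍ X, ‖f X - c‖ ∂μ :=
  integral_norm_sub_integral_le hf.to_average c

theorem integrable_and_average_norm_sub_average_le [IsFiniteMeasure μ] [NeZero μ]
    [CompleteSpace G] {f : Ω → G} (hf : AEStronglyMeasurable f μ) {c : G} {C : ℝ≥0∞} (hC : C ≠ ∞)
    (h : ∫⁻ X, ‖f X - c‖ₑ ∂μ ≤ C * μ univ) :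
    Integrable f μ ∧ ⨍ X, ‖f X - ⨍ Y, f Y ∂μ‖ ∂μ ≤ 2 * C.toReal := by
  have hfc : Integrable (fun X => f X - c) μ :=
    ⟨hf.sub aestronglyMeasurable_const, h.trans_lt (by finiteness)⟩
  have hfi : Integrable f μ := by
    simpa only [Pi.add_def, sub_add_cancel] using hfc.add (integrable_const c)
  refine ⟨hfi, (average_norm_sub_average_le hfi c).trans ?_⟩
  gcongr
  rw [average_eq, integral_norm_eq_lintegral_enorm hfc.aestronglyMeasurable, smul_eq_mul,
    inv_mul_le_iff₀ measureReal_univ_pos, Measure.real, ← ENNReal.toReal_mul,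
    mul_comm]
  exact ENNReal.toReal_mono (by finiteness) h

end MeanOscillation

section HeightMeasure

variable {α : ℝ}

/-- The measure with density `t ^ α` on the line. It is only used on subsets of `(0, ∞)`: on the
negative half-line `Real.rpow` takes junk values. -/
def heightMeasure (α : ℝ) : Measure ℝ := volume.withDensity fun t => ENNReal.ofReal (t ^ α)

instance : SFinite (heightMeasure α) := by unfold heightMeasure; infer_instance

theorem measurable_ofReal_rpow (α : ℝ) : Measurable fun t : ℝ => ENNReal.ofReal (t ^ α) := by
  fun_prop

theorem heightMeasure_Ioo (hα : -1 < α) {s : ℝ} (hs : 0 ≤ s) :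
    heightMeasure α (Ioo 0 s) = ENNReal.ofReal (s ^ (α + 1) / (α + 1)) := by
  have hint : IntegrableOn (fun t : ℝ => t ^ α) (Ioo 0 s) :=
    (intervalIntegral.intervalIntegrable_rpow' hα).1.mono_set Ioo_subset_Ioc_self
  rw [heightMeasure, withDensity_apply _ measurableSet_Ioo,
    ← ofReal_integral_eq_lintegral_ofReal hint
      (ae_restrict_of_forall_mem measurableSet_Ioo fun t ht => rpow_nonneg ht.1.le α),
    ← integral_Ioc_eq_integral_Ioo, ← intervalIntegral.integral_of_le hs,
    integral_rpow (Or.inl hα), zero_rpow (by linarith), sub_zero]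

/-- Hardy's inequality in `L¹`, where it is an identity. -/
theorem lintegral_Ioi_lintegral_Ioi_div (hα : -1 < α) {κ : ℝ} (hκ : 0 < κ) {g : ℝ → ℝ≥0∞}
    (hg : Measurable g) :
    ∫⁻ t in Ioi 0, (∫⁻ τ in Ioi (t / κ), g τ) ∂heightMeasure α =
      ENNReal.ofReal (κ ^ (α + 1) / (α + 1)) * ∫⁻ τ in Ioi 0, g τ ∂heightMeasure (α + 1) := by
  have hinner : ∀ t ∈ Ioi (0 : ℝ), ∫⁻ τ in Ioi (t / κ), g τ =
      ∫⁻ τ in Ioi 0, (Iio (κ * τ)).indicator (fun _ => g τ) t := by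
    intro t ht
    rw [← inter_eq_self_of_subset_left (Ioi_subset_Ioi (div_pos ht hκ).le),
      ← setLIntegral_indicator measurableSet_Ioi]
    refine lintegral_congr fun τ => ?_
    simp only [indicator, mem_Ioi, mem_Iio, div_lt_iff₀' hκ]
  have hmeas : Measurable fun p : ℝ × ℝ => (Iio (κ * p.2)).indicator (fun _ => g p.2) p.1 := by
    have hset : MeasurableSet {p : ℝ × ℝ | p.1 < κ * p.2} :=
      measurableSet_lt (by fun_prop) (by fun_prop)
    exact (hg.comp measurable_snd).indicator hset
  rw [setLIntegral_congr_fun measurableSet_Ioi hinner, lintegral_lintegral_swap hmeas.aemeasurable,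
    heightMeasure, heightMeasure, setLIntegral_withDensity_eq_setLIntegral_mul_non_measurable _
      (measurable_ofReal_rpow _) _ measurableSet_Ioi (by simp),
    ← lintegral_const_mul' _ _ ENNReal.ofReal_ne_top]
  refine setLIntegral_congr_fun measurableSet_Ioi fun τ hτ => ?_
  have hτ0 : 0 < τ := hτ
  have hα' : 0 < α + 1 := by linarith
  simp only [Pi.mul_apply]
  rw [lintegral_indicator_const measurableSet_Iio, Measure.restrict_apply measurableSet_Iio,
    inter_comm, Ioi_inter_Iio, ← heightMeasure, heightMeasure_Ioo hα (by positivity),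
    mul_rpow hκ.le hτ0.le, mul_div_right_comm, ENNReal.ofReal_mul (by positivity)]
  ring

end HeightMeasure

section HalfCylinder

variable {E : Type*}

/-- The measure `t ^ α dx dt` on `E × ℝ`, used on subsets of the half-space `t > 0`. -/
def weightedVolume (E : Type*) [MeasureSpace E] (α : ℝ) : Measure (E × ℝ) :=
  volume.prod (heightMeasure α)

theorem weightedVolume_eq_withDensity [MeasureSpace E] (α : ℝ) :
    weightedVolume E α = volume.withDensity fun X : E × ℝ => ENNReal.ofReal (X.2 ^ α) :=
  prod_withDensity_right (measurable_ofReal_rpow α)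

theorem setLIntegral_weightedVolume [MeasureSpace E] (α : ℝ) {S : Set (E × ℝ)}
    (hS : MeasurableSet S) (g : E × ℝ → ℝ≥0∞) :
    ∫⁻ X in S, g X ∂weightedVolume E α = ∫⁻ X in S, ENNReal.ofReal (X.2 ^ α) * g X := by
  rw [weightedVolume_eq_withDensity]
  exact setLIntegral_withDensity_eq_setLIntegral_mul_non_measurable _ (by fun_prop) _ hS (by simp)

theorem setIntegral_weightedVolume [MeasureSpace E] (α : ℝ) {S : Set (E × ℝ)}
    (hS : MeasurableSet S) (hpos : ∀ X ∈ S, 0 < X.2) (f : E × ℝ → ℝ) :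
    ∫ X in S, f X ∂weightedVolume E α = ∫ X in S, X.2 ^ α * f X := by
  rw [weightedVolume_eq_withDensity, setIntegral_withDensity_eq_setIntegral_toReal_smul
    (by fun_prop) (.of_forall fun _ => ENNReal.ofReal_lt_top) _ hS]
  refine setIntegral_congr_fun hS fun X hX => ?_
  simp only [ENNReal.toReal_ofReal (rpow_nonneg (hpos X hX).le α), smul_eq_mul]

theorem setAverage_weightedVolume [MeasureSpace E] (α : ℝ) {S : Set (E × ℝ)}
    (hS : MeasurableSet S) (hpos : ∀ X ∈ S, 0 < X.2) (f : E × ℝ → ℝ) :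
    ⨍ X in S, f X ∂weightedVolume E α = (∫ X in S, f X * X.2 ^ α) / ∫ X in S, X.2 ^ α := by
  have hmass : (weightedVolume E α).real S = ∫ X in S, X.2 ^ α := by
    simpa using setIntegral_weightedVolume α hS hpos fun _ => 1
  rw [setAverage_eq, hmass, setIntegral_weightedVolume α hS hpos, smul_eq_mul, div_eq_inv_mul]
  simp only [mul_comm]

theorem setLIntegral_lintegral_Ioi_div [MeasureSpace E] [SFinite (volume : Measure E)] {α κ : ℝ}
    (hα : -1 < α) (hκ : 0 < κ) {g : E × ℝ → ℝ≥0∞} (hg : Measurable g) :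
    ∫⁻ X in univ ×ˢ Ioi 0, (∫⁻ τ in Ioi (X.2 / κ), g (X.1, τ)) ∂weightedVolume E α =
      ENNReal.ofReal (κ ^ (α + 1) / (α + 1)) *
        ∫⁻ X in univ ×ˢ Ioi 0, g X ∂weightedVolume E (α + 1) := by
  have hmeas : Measurable fun X : E × ℝ => ∫⁻ τ in Ioi (X.2 / κ), g (X.1, τ) := by
    have hset : MeasurableSet {q : (E × ℝ) × ℝ | q.1.2 / κ < q.2} :=
      measurableSet_lt (by fun_prop) (by fun_prop)
    simp_rw [← lintegral_indicator measurableSet_Ioi]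
    exact Measurable.lintegral_prod_right' (Measurable.indicator
      (f := fun q : (E × ℝ) × ℝ => g (q.1.1, q.2)) (by fun_prop) hset)
  calc ∫⁻ X in univ ×ˢ Ioi 0, (∫⁻ τ in Ioi (X.2 / κ), g (X.1, τ)) ∂weightedVolume E α
      = ∫⁻ x, ENNReal.ofReal (κ ^ (α + 1) / (α + 1)) *
          ∫⁻ τ in Ioi 0, g (x, τ) ∂heightMeasure (α + 1) := by
        rw [weightedVolume, setLIntegral_prod _ hmeas.aemeasurable, Measure.restrict_univ]
        exact lintegral_congr fun x =>
          lintegral_Ioi_lintegral_Ioi_div hα hκ (hg.comp measurable_prodMk_left)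
    _ = _ := by
        rw [lintegral_const_mul' _ _ ENNReal.ofReal_ne_top, weightedVolume,
          setLIntegral_prod _ hg.aemeasurable, Measure.restrict_univ]

variable [NormedAddCommGroup E]

/-- The cylinder `Q_r(y) = B_r(y) × (0, r)` standing on the boundary `t = 0` of the upper
half-space. -/
def halfCylinder (y : E) (r : ℝ) : Set (E × ℝ) := ball y r ×ˢ Ioo 0 r

theorem isOpen_halfCylinder (y : E) (r : ℝ) : IsOpen (halfCylinder y r) :=
  isOpen_ball.prod isOpen_Ioo

/-- Since `T ≥ r / 2`, the vertical segment from `(x, t)` to `(x, T)` stays above height `t / 2`,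
so the weighted Hardy identity applies. -/
theorem enorm_sub_slice_le_lintegral_Ioi [NormedSpace ℝ E] {G : Type*} [NormedAddCommGroup G]
    [NormedSpace ℝ G] {y : E} {r : ℝ} {W : E × ℝ → G}
    (hW : ContDiffOn ℝ 1 W (halfCylinder y r)) {T : ℝ} (hT : T ∈ Ioo (r / 2) r) {X : E × ℝ}
    (hX : X ∈ halfCylinder y r) :
    ‖W X - W (X.1, T)‖ₑ ≤ ∫⁻ τ in Ioi (X.2 / 2),
      (halfCylinder y r).indicator (fun X => ‖fderiv ℝ W X‖ₑ) (X.1, τ) := by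
  obtain ⟨x, t⟩ := X
  obtain ⟨hx, ht⟩ := hX
  have hmem : ∀ τ ∈ uIcc t T, (x, τ) ∈ halfCylinder y r := fun τ hτ =>
    ⟨hx, (lt_min ht.1 (by linarith [hT.1, ht.1, ht.2])).trans_le hτ.1,
      hτ.2.trans_lt (max_lt ht.2 hT.2)⟩
  calc ‖W (x, t) - W (x, T)‖ₑ ≤ ∫⁻ τ in uIcc t T, ‖fderiv ℝ W (x, τ)‖ₑ :=
        enorm_sub_le_lintegral_fderiv_vertical (isOpen_halfCylinder y r) hW hmem
    _ = ∫⁻ τ in uIcc t T, (halfCylinder y r).indicator (fun X => ‖fderiv ℝ W X‖ₑ) (x, τ) :=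
        setLIntegral_congr_fun measurableSet_uIcc fun τ hτ =>
          (indicator_of_mem (hmem τ hτ) fun X => ‖fderiv ℝ W X‖ₑ).symm
    _ ≤ ∫⁻ τ in Ioi (t / 2), (halfCylinder y r).indicator (fun X => ‖fderiv ℝ W X‖ₑ) (x, τ) :=
        lintegral_mono_set fun τ hτ =>
          (lt_min (by linarith [ht.1]) (by linarith [ht.2, hT.1])).trans_le hτ.1

theorem measurableSet_halfCylinder [MeasurableSpace E] [BorelSpace E] (y : E) (r : ℝ) :
    MeasurableSet (halfCylinder y r) :=
  measurableSet_ball.prod measurableSet_Ioo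

variable [MeasureSpace E] {α r : ℝ} {y : E}

theorem weightedVolume_halfCylinder (hα : -1 < α) (hr : 0 ≤ r) :
    weightedVolume E α (halfCylinder y r) =
      volume (ball y r) * ENNReal.ofReal (r ^ (α + 1) / (α + 1)) := by
  rw [weightedVolume, halfCylinder, Measure.prod_prod, heightMeasure_Ioo hα hr]

theorem weightedVolume_halfCylinder_ne_top [ProperSpace E]
    [IsFiniteMeasureOnCompacts (volume : Measure E)] (hα : -1 < α) (hr : 0 ≤ r) :
    weightedVolume E α (halfCylinder y r) ≠ ∞ := by
  rw [weightedVolume_halfCylinder hα hr]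
  exact ENNReal.mul_ne_top measure_ball_lt_top.ne ENNReal.ofReal_ne_top

theorem weightedVolume_halfCylinder_ne_zero [(volume : Measure E).IsOpenPosMeasure]
    (hα : -1 < α) (hr : 0 < r) : weightedVolume E α (halfCylinder y r) ≠ 0 := by
  have hα' : 0 < α + 1 := by linarith
  rw [weightedVolume_halfCylinder hα hr.le]
  exact mul_ne_zero (measure_ball_pos _ _ hr).ne' (ENNReal.ofReal_pos.2 (by positivity)).ne'

variable [BorelSpace E]

theorem ofReal_rpow_mul_setLIntegral_le (hα : 0 ≤ α) (hr : 0 ≤ r) (g : E × ℝ → ℝ≥0∞) :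
    ENNReal.ofReal (r ^ α) * ∫⁻ X in ball y r ×ˢ Ioo (r / 2) r, g X ≤
      ENNReal.ofReal (2 ^ α) * ∫⁻ X in halfCylinder y r, g X ∂weightedVolume E α := by
  rw [setLIntegral_weightedVolume _ (measurableSet_halfCylinder y r),
    ← lintegral_const_mul' _ _ ENNReal.ofReal_ne_top,
    ← lintegral_const_mul' _ _ ENNReal.ofReal_ne_top]
  refine (setLIntegral_mono' (measurableSet_ball.prod measurableSet_Ioo) fun X hX => ?_).trans
    (lintegral_mono_set (prod_mono_right (Ioo_subset_Ioo_left (by linarith))))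
  rw [← mul_assoc, ← ENNReal.ofReal_mul (by positivity), ← mul_rpow two_pos.le
    (by linarith [hX.2.1])]
  gcongr
  linarith [hX.2.1]

theorem aemeasurable_enorm_slice_sub {G : Type*} [NormedAddCommGroup G] {W : E × ℝ → G}
    (hW : ContinuousOn W (halfCylinder y r)) {T : ℝ} (hT : T ∈ Ioo 0 r) (c : G) :
    AEMeasurable (fun X : E × ℝ => ‖W (X.1, T) - c‖ₑ)
      ((weightedVolume E α).restrict (halfCylinder y r)) := by
  have hslice : ContinuousOn (fun X : E × ℝ => W (X.1, T)) (halfCylinder y r) :=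
    hW.comp (by fun_prop) fun X hX => ⟨hX.1, hT⟩
  exact (hslice.sub continuousOn_const).enorm.aemeasurable (measurableSet_halfCylinder y r)

theorem setLIntegral_enorm_slice_sub_le [SFinite (volume : Measure E)]
    {G : Type*} [NormedAddCommGroup G] (hα : -1 < α) (hr : 0 ≤ r) {W : E × ℝ → G}
    (hW : ContinuousOn W (halfCylinder y r)) {T : ℝ} (hT : T ∈ Ioo 0 r) {c : G} {N : ℝ≥0∞}
    {g : E × ℝ → ℝ≥0∞}
    (hslice : ∫⁻ x in ball y r, ‖W (x, T) - c‖ₑ ≤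
      N * ∫⁻ X in ball y r ×ˢ Ioo (r / 2) r, g X) :
    ∫⁻ X in halfCylinder y r, ‖W (X.1, T) - c‖ₑ ∂weightedVolume E α ≤
      ENNReal.ofReal (2 ^ (α + 1) / (α + 1)) * N *
        ∫⁻ X in halfCylinder y r, g X ∂weightedVolume E (α + 1) := by
  have hα' : 0 < α + 1 := by linarith
  calc ∫⁻ X in halfCylinder y r, ‖W (X.1, T) - c‖ₑ ∂weightedVolume E α
      = ENNReal.ofReal (r ^ (α + 1) / (α + 1)) * ∫⁻ x in ball y r, ‖W (x, T) - c‖ₑ := by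
        rw [weightedVolume, halfCylinder,
          setLIntegral_prod _ (aemeasurable_enorm_slice_sub hW hT c)]
        simp_rw [setLIntegral_const]
        rw [heightMeasure_Ioo hα hr, lintegral_mul_const' _ _ ENNReal.ofReal_ne_top, mul_comm]
    _ ≤ ENNReal.ofReal ((α + 1)⁻¹) * N * (ENNReal.ofReal (r ^ (α + 1)) *
          ∫⁻ X in ball y r ×ˢ Ioo (r / 2) r, g X) := by
        rw [div_eq_mul_inv, ENNReal.ofReal_mul (by positivity)]
        grw [hslice]
        exact le_of_eq (by ring)
    _ ≤ ENNReal.ofReal ((α + 1)⁻¹) * N * (ENNReal.ofReal (2 ^ (α + 1)) *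
          ∫⁻ X in halfCylinder y r, g X ∂weightedVolume E (α + 1)) := by
        gcongr ENNReal.ofReal ((α + 1)⁻¹) * N * ?_
        exact ofReal_rpow_mul_setLIntegral_le hα'.le hr _
    _ = _ := by
        rw [div_eq_mul_inv, ENNReal.ofReal_mul (by positivity)]
        ring

variable [NormedSpace ℝ E] [FiniteDimensional ℝ E] [(volume : Measure E).IsAddHaarMeasure]

theorem weightedVolume_halfCylinder_two_mul (hα : -1 < α) (hr : 0 < r) :
    weightedVolume E α (halfCylinder y (2 * r)) =
      ENNReal.ofReal (2 ^ Module.finrank ℝ E * 2 ^ (α + 1)) *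
        weightedVolume E α (halfCylinder y r) := by
  have hball : volume (ball y (2 * r)) =
      ENNReal.ofReal (2 ^ Module.finrank ℝ E) * volume (ball y r) := by
    rw [Measure.addHaar_ball_mul_of_pos _ _ two_pos, Measure.addHaar_ball_center volume y]
  rw [weightedVolume_halfCylinder hα hr.le, weightedVolume_halfCylinder hα (by positivity), hball,
    mul_rpow two_pos.le hr.le, mul_div_assoc, ENNReal.ofReal_mul (by positivity),
    ENNReal.ofReal_mul (by positivity)]
  ring

variable {G : Type*} [NormedAddCommGroup G] [NormedSpace ℝ G]

theorem setLIntegral_enorm_sub_slice_le [CompleteSpace G] (hα : -1 < α) {W : E × ℝ → G}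
    (hW : ContDiffOn ℝ 1 W (halfCylinder y r)) {T : ℝ} (hT : T ∈ Ioo (r / 2) r) :
    ∫⁻ X in halfCylinder y r, ‖W X - W (X.1, T)‖ₑ ∂weightedVolume E α ≤
      ENNReal.ofReal (2 ^ (α + 1) / (α + 1)) *
        ∫⁻ X in halfCylinder y r, ‖fderiv ℝ W X‖ₑ ∂weightedVolume E (α + 1) := by
  set g : E × ℝ → ℝ≥0∞ := (halfCylinder y r).indicator fun X => ‖fderiv ℝ W X‖ₑ
  have hg : Measurable g :=
    (measurable_fderiv ℝ W).enorm.indicator (measurableSet_halfCylinder y r)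
  have hsub : halfCylinder y r ⊆ univ ×ˢ Ioi 0 := prod_mono (subset_univ _) fun t ht => ht.1
  calc ∫⁻ X in halfCylinder y r, ‖W X - W (X.1, T)‖ₑ ∂weightedVolume E α
      ≤ ∫⁻ X in halfCylinder y r, (∫⁻ τ in Ioi (X.2 / 2), g (X.1, τ)) ∂weightedVolume E α :=
        setLIntegral_mono' (measurableSet_halfCylinder y r) fun X =>
          enorm_sub_slice_le_lintegral_Ioi hW hT
    _ ≤ ∫⁻ X in univ ×ˢ Ioi 0, (∫⁻ τ in Ioi (X.2 / 2), g (X.1, τ)) ∂weightedVolume E α :=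
        lintegral_mono_set hsub
    _ = ENNReal.ofReal (2 ^ (α + 1) / (α + 1)) *
          ∫⁻ X in univ ×ˢ Ioi 0, g X ∂weightedVolume E (α + 1) :=
        setLIntegral_lintegral_Ioi_div hα two_pos hg
    _ = _ := by
        rw [setLIntegral_indicator (measurableSet_halfCylinder y r),
          inter_eq_self_of_subset_left hsub]

theorem exists_slice_setLIntegral_enorm_sub_le [CompleteSpace G] (hr : 0 < r) {W : E × ℝ → G}
    (hW : ContDiffOn ℝ 1 W (ball y r ×ˢ Ioo (r / 2) r)) :
    ∃ T ∈ Ioo (r / 2) r, ∃ c, ∫⁻ x in ball y r, ‖W (x, T) - c‖ₑ ≤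
      4 * 2 ^ Module.finrank ℝ (E × ℝ) *
        ∫⁻ X in ball y r ×ˢ Ioo (r / 2) r, ‖fderiv ℝ W X‖ₑ := by
  set R : Set (E × ℝ) := ball y r ×ˢ Ioo (r / 2) r
  have hRball : R ⊆ ball (y, r) r := by
    rw [← ball_prod_same, Real.ball_eq_Ioo]
    exact prod_mono_right (Ioo_subset_Ioo (by linarith) (by linarith))
  have hRopen : IsOpen R := isOpen_ball.prod isOpen_Ioo
  have hdiam : ediam R ≤ ENNReal.ofReal (2 * r) := by
    rw [ENNReal.ofReal_mul two_pos.le, ENNReal.ofReal_ofNat]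
    rw [← Metric.eball_ofReal] at hRball
    exact (ediam_mono hRball).trans ediam_eball_le
  obtain ⟨c, hc⟩ := exists_convex_poincare ((volume : Measure E).prod volume) hRopen
    ((convex_ball y r).prod (convex_Ioo _ _))
    ((measure_mono hRball).trans_lt measure_ball_lt_top).ne hW
  have hmeas : AEMeasurable (fun X => ‖W X - c‖ₑ)
      (((volume : Measure E).prod volume).restrict R) :=
    ((hW.continuousOn.sub continuousOn_const).enorm).aemeasurable hRopen.measurableSet
  obtain ⟨T, hT, hle⟩ := exists_le_setLAverage (μ := (volume : Measure ℝ)) (s := Ioo (r / 2) r)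
    (by simp [hr]) (by simp) (f := fun T => ∫⁻ x in ball y r, ‖W (x, T) - c‖ₑ)
    (by
      rw [← Measure.prod_restrict] at hmeas
      exact hmeas.lintegral_prod_left')
  refine ⟨T, hT, c, hle.trans ?_⟩
  have hhalf : ENNReal.ofReal (2 * r) = 4 * ENNReal.ofReal (r / 2) := by
    rw [← ENNReal.ofReal_ofNat, ← ENNReal.ofReal_mul (by norm_num)]
    ring_nf
  rw [setLAverage_eq, Real.volume_Ioo, sub_half, ← setLIntegral_prod_symm _ hmeas]
  refine ENNReal.div_le_of_le_mul (hc.trans ?_)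
  calc _ ≤ 2 ^ Module.finrank ℝ (E × ℝ) * ENNReal.ofReal (2 * r) *
          ∫⁻ X in R, ‖fderiv ℝ W X‖ₑ := by
        gcongr
        rfl
    _ = _ := by
        rw [hhalf]
        ring

theorem exists_halfCylinder_poincare [CompleteSpace G] (hα : -1 < α) (hr : 0 < r) {W : E × ℝ → G}
    (hW : ContDiffOn ℝ 1 W (halfCylinder y r)) :
    ∃ c, ∫⁻ X in halfCylinder y r, ‖W X - c‖ₑ ∂weightedVolume E α ≤
      ENNReal.ofReal (2 ^ (α + 1) / (α + 1)) * (1 + 4 * 2 ^ Module.finrank ℝ (E × ℝ)) *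
        ∫⁻ X in halfCylinder y r, ‖fderiv ℝ W X‖ₑ ∂weightedVolume E (α + 1) := by
  obtain ⟨T, hT, c, hslice⟩ := exists_slice_setLIntegral_enorm_sub_le (y := y) hr
    (hW.mono (prod_mono_right (Ioo_subset_Ioo_left (by linarith))))
  set J := ∫⁻ X in halfCylinder y r, ‖fderiv ℝ W X‖ₑ ∂weightedVolume E (α + 1)
  set N : ℝ≥0∞ := 4 * 2 ^ Module.finrank ℝ (E × ℝ)
  have hT0 : T ∈ Ioo 0 r := ⟨by linarith [hT.1], hT.2⟩
  refine ⟨c, ?_⟩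
  calc ∫⁻ X in halfCylinder y r, ‖W X - c‖ₑ ∂weightedVolume E α
      ≤ ∫⁻ X in halfCylinder y r, (‖W X - W (X.1, T)‖ₑ + ‖W (X.1, T) - c‖ₑ) ∂weightedVolume E α :=
        lintegral_mono fun X => by
          simpa only [edist_eq_enorm_sub] using edist_triangle (W X) (W (X.1, T)) c
    _ = ∫⁻ X in halfCylinder y r, ‖W X - W (X.1, T)‖ₑ ∂weightedVolume E α +
          ∫⁻ X in halfCylinder y r, ‖W (X.1, T) - c‖ₑ ∂weightedVolume E α :=
        lintegral_add_right' _ (aemeasurable_enorm_slice_sub hW.continuousOn hT0 c)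
    _ ≤ ENNReal.ofReal (2 ^ (α + 1) / (α + 1)) * J +
          ENNReal.ofReal (2 ^ (α + 1) / (α + 1)) * N * J :=
        add_le_add (setLIntegral_enorm_sub_slice_le hα hW hT)
          (setLIntegral_enorm_slice_sub_le hα hr.le hW.continuousOn hT0 hslice)
    _ = _ := by ring

end HalfCylinder

section Caccioppoli

set_option maxSynthPendingDepth 3

variable {F : Type*} [NormedAddCommGroup F] [NormedSpace ℝ F]

theorem contDiff_mul_of_tsupport_subset {Ω : Set F} (hΩ : IsOpen Ω) {ζ f : F → ℝ}
    (hζ : ContDiff ℝ 1 ζ) (hsupp : tsupport ζ ⊆ Ω) (hf : ContDiffOn ℝ 1 f Ω) :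
    ContDiff ℝ 1 (ζ * f) := by
  rw [contDiff_iff_contDiffAt]
  intro X
  by_cases hX : X ∈ tsupport ζ
  · exact hζ.contDiffAt.mul (hf.contDiffAt (hΩ.mem_nhds (hsupp hX)))
  · have hzero : ζ * f =ᶠ[𝓝 X] fun _ => 0 :=
      notMem_tsupport_iff_eventuallyEq.1 fun h => hX (tsupport_mul_subset_left h)
    exact contDiffAt_const.congr_of_eventuallyEq hzero

variable {A : (F →L[ℝ] ℝ) →L[ℝ] (F →L[ℝ] ℝ) →L[ℝ] ℝ}

theorem apply_fderiv_mul_inv {P ζ : F → ℝ} {X : F} (hP : DifferentiableAt ℝ P X)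
    (hζ : DifferentiableAt ℝ ζ X) (hX : P X ≠ 0) :
    A (fderiv ℝ P X) (fderiv ℝ (ζ * P⁻¹) X) =
      A (fderiv ℝ (fun X => log (P X)) X) (fderiv ℝ ζ X) -
        ζ X * A (fderiv ℝ (fun X => log (P X)) X) (fderiv ℝ (fun X => log (P X)) X) := by
  have hφ : fderiv ℝ (ζ * P⁻¹) X =
      (P X)⁻¹ • fderiv ℝ ζ X - (ζ X * ((P X) ^ 2)⁻¹) • fderiv ℝ P X := by
    have hinv := (hasDerivAt_inv hX).comp_hasFDerivAt X hP.hasFDerivAt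
    refine ((hζ.hasFDerivAt.mul hinv).congr_fderiv ?_).fderiv
    ext v
    simp
    ring
  rw [hφ, fderiv.log hP hX]
  simp only [map_sub, map_smul, smul_apply, smul_eq_mul]
  ring

theorem mul_norm_sq_le_of_sq_norm_le_mul {c : ℝ} (hc : 0 < c)
    (hA : ∀ L, c * ‖L‖ ^ 2 ≤ A L L) {L B : F →L[ℝ] ℝ} {z M : ℝ} (hz : 0 ≤ z) (hM : 0 ≤ M)
    (hB : ‖B‖ ^ 2 ≤ M * z) :
    z * ‖L‖ ^ 2 ≤ -(2 / c) * (A L B - z * A L L) + ‖A‖ ^ 2 * M / c ^ 2 := by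
  have hcross : A L B ≤ c / 2 * (z * ‖L‖ ^ 2) + ‖A‖ ^ 2 * M / (2 * c) := by
    have hB' : ‖B‖ ≤ √M * √z := by
      rw [← sqrt_mul hM]
      exact le_sqrt_of_sq_le hB
    calc A L B ≤ ‖A‖ * ‖L‖ * ‖B‖ := (le_abs_self _).trans (A.le_opNorm₂ L B)
      _ ≤ ‖A‖ * ‖L‖ * (√M * √z) := by gcongr
      _ = ((√z * ‖L‖) * c) * (‖A‖ * √M) / c := by field_simp
      _ ≤ (((√z * ‖L‖) * c) ^ 2 + (‖A‖ * √M) ^ 2) / 2 / c := by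
          gcongr
          linarith [two_mul_le_add_sq ((√z * ‖L‖) * c) (‖A‖ * √M)]
      _ = _ := by
          rw [mul_pow, mul_pow, mul_pow, sq_sqrt hz, sq_sqrt hM]
          field_simp
  have hzA : c * (z * ‖L‖ ^ 2) ≤ z * A L L := by
    nlinarith [mul_le_mul_of_nonneg_left (hA L) hz]
  have hhalf : c / 2 * (z * ‖L‖ ^ 2) ≤ -(A L B - z * A L L) + ‖A‖ ^ 2 * M / (2 * c) := by linarith
  calc z * ‖L‖ ^ 2 = 2 / c * (c / 2 * (z * ‖L‖ ^ 2)) := by field_simp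
    _ ≤ 2 / c * (-(A L B - z * A L L) + ‖A‖ ^ 2 * M / (2 * c)) := by gcongr
    _ = _ := by field_simp

variable [MeasurableSpace F]

/-- `P` is a weak supersolution of `div (ν A ∇P) ≤ 0` in `Ω`, where the constant coefficients `A`
are a bilinear form on covectors and the measure `ν` plays the role of the weight. -/
def IsWeakSupersolOn (A : (F →L[ℝ] ℝ) →L[ℝ] (F →L[ℝ] ℝ) →L[ℝ] ℝ) (ν : Measure F) (Ω : Set F)
    (P : F → ℝ) : Prop :=
  ∀ φ : F → ℝ, ContDiff ℝ 1 φ → HasCompactSupport φ → tsupport φ ⊆ Ω → (∀ X, 0 ≤ φ X) →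
    0 ≤ ∫ X in Ω, A (fderiv ℝ P X) (fderiv ℝ φ X) ∂ν

variable {ν : Measure F} {Ω : Set F} {P : F → ℝ}

theorem IsWeakSupersolOn.add_const (h : IsWeakSupersolOn A ν Ω P) (k : ℝ) :
    IsWeakSupersolOn A ν Ω fun X => P X + k := by
  simpa only [IsWeakSupersolOn, fderiv_add_const] using h

variable [BorelSpace F]

/-- Test the equation with `ζ / P`. -/
theorem IsWeakSupersolOn.integral_apply_fderiv_log_nonneg (h : IsWeakSupersolOn A ν Ω P)
    (hΩ : IsOpen Ω) (hP : ContDiffOn ℝ 1 P Ω) (hpos : ∀ X ∈ Ω, 0 < P X) {ζ : F → ℝ}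
    (hζ : ContDiff ℝ 1 ζ) (hcompact : HasCompactSupport ζ) (hsupp : tsupport ζ ⊆ Ω)
    (hζ0 : ∀ X, 0 ≤ ζ X) :
    0 ≤ ∫ X in tsupport ζ, (A (fderiv ℝ (fun X => log (P X)) X) (fderiv ℝ ζ X) -
      ζ X * A (fderiv ℝ (fun X => log (P X)) X) (fderiv ℝ (fun X => log (P X)) X)) ∂ν := by
  have hφsupp : tsupport (ζ * P⁻¹) ⊆ tsupport ζ := tsupport_mul_subset_left
  have hφ0 (X : F) : 0 ≤ (ζ * P⁻¹) X := by
    by_cases hX : X ∈ tsupport ζ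
    · exact mul_nonneg (hζ0 X) (inv_nonneg.2 (hpos X (hsupp hX)).le)
    · simp [image_eq_zero_of_notMem_tsupport hX]
  have htest := h (ζ * P⁻¹)
    (contDiff_mul_of_tsupport_subset hΩ hζ hsupp (hP.inv fun X hX => (hpos X hX).ne'))
    hcompact.mul_right (hφsupp.trans hsupp) hφ0
  rw [setIntegral_eq_of_subset_of_forall_sdiff_eq_zero hΩ.measurableSet hsupp fun X hX => by
    rw [fderiv_of_notMem_tsupport ℝ fun hmem => hX.2 (hφsupp hmem), map_zero]] at htest
  refine htest.trans_eq (setIntegral_congr_fun (isClosed_tsupport ζ).measurableSet fun X hX => ?_)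
  exact apply_fderiv_mul_inv ((hP.contDiffAt (hΩ.mem_nhds (hsupp hX))).differentiableAt
    one_ne_zero) (hζ.differentiable one_ne_zero X) (hpos X (hsupp hX)).ne'

theorem integrableOn_tsupport_apply_fderiv {W ζ : F → ℝ} (hΩ : IsOpen Ω)
    (hW : ContDiffOn ℝ 1 W Ω) (hζ : ContDiff ℝ 1 ζ) (hcompact : HasCompactSupport ζ)
    (hsupp : tsupport ζ ⊆ Ω) (hν : ν (tsupport ζ) ≠ ∞) :
    IntegrableOn (fun X => A (fderiv ℝ W X) (fderiv ℝ ζ X) - ζ X * A (fderiv ℝ W X) (fderiv ℝ W X))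
      (tsupport ζ) ν := by
  have hW' : ContinuousOn (fderiv ℝ W) (tsupport ζ) :=
    (hW.continuousOn_fderiv_of_isOpen hΩ le_rfl).mono hsupp
  have hcont : ContinuousOn (fun X => A (fderiv ℝ W X) (fderiv ℝ ζ X) -
      ζ X * A (fderiv ℝ W X) (fderiv ℝ W X)) (tsupport ζ) := by
    have hζc := hζ.continuous
    fun_prop
  obtain ⟨C, hC⟩ := hcompact.isCompact.exists_bound_of_continuousOn hcont
  have : IsFiniteMeasure (ν.restrict (tsupport ζ)) := isFiniteMeasure_restrict.2 hν
  exact Integrable.of_bound (hcont.aestronglyMeasurable_of_isCompact hcompact.isCompact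
    (isClosed_tsupport ζ).measurableSet) C
    (ae_restrict_of_forall_mem (isClosed_tsupport ζ).measurableSet hC)

theorem IsWeakSupersolOn.lintegral_mul_sq_norm_fderiv_log_le (h : IsWeakSupersolOn A ν Ω P)
    {c : ℝ} (hc : 0 < c) (hA : ∀ L, c * ‖L‖ ^ 2 ≤ A L L) (hΩ : IsOpen Ω)
    (hP : ContDiffOn ℝ 1 P Ω) (hpos : ∀ X ∈ Ω, 0 < P X) {ζ : F → ℝ} (hζ : ContDiff ℝ 1 ζ)
    (hcompact : HasCompactSupport ζ) (hsupp : tsupport ζ ⊆ Ω) (hζ0 : ∀ X, 0 ≤ ζ X) {M : ℝ}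
    (hM : 0 ≤ M) (hgrad : ∀ X, ‖fderiv ℝ ζ X‖ ^ 2 ≤ M * ζ X) (hν : ν (tsupport ζ) ≠ ∞) :
    ∫⁻ X in tsupport ζ, ENNReal.ofReal (ζ X * ‖fderiv ℝ (fun X => log (P X)) X‖ ^ 2) ∂ν ≤
      ENNReal.ofReal (‖A‖ ^ 2 * M / c ^ 2) * ν (tsupport ζ) := by
  set dW : F → F →L[ℝ] ℝ := fderiv ℝ fun X => log (P X)
  set f : F → ℝ := fun X => A (dW X) (fderiv ℝ ζ X) - ζ X * A (dW X) (dW X)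
  set N : ℝ := ‖A‖ ^ 2 * M / c ^ 2
  have hf : IntegrableOn f (tsupport ζ) ν := integrableOn_tsupport_apply_fderiv hΩ
    (hP.log fun X hX => (hpos X hX).ne') hζ hcompact hsupp hν
  have hf0 : 0 ≤ ∫ X in tsupport ζ, f X ∂ν :=
    h.integral_apply_fderiv_log_nonneg hΩ hP hpos hζ hcompact hsupp hζ0
  have hyoung (X : F) : ζ X * ‖dW X‖ ^ 2 ≤ -(2 / c) * f X + N :=
    mul_norm_sq_le_of_sq_norm_le_mul hc hA (hζ0 X) hM (hgrad X)
  have hconst : IntegrableOn (fun _ => N) (tsupport ζ) ν := integrableOn_const hν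
  calc ∫⁻ X in tsupport ζ, ENNReal.ofReal (ζ X * ‖dW X‖ ^ 2) ∂ν
      ≤ ∫⁻ X in tsupport ζ, ENNReal.ofReal (-(2 / c) * f X + N) ∂ν :=
        lintegral_mono fun X => ENNReal.ofReal_le_ofReal (hyoung X)
    _ = ENNReal.ofReal (∫ X in tsupport ζ, (-(2 / c) * f X + N) ∂ν) :=
        (ofReal_integral_eq_lintegral_ofReal ((hf.const_mul _).add hconst) <| .of_forall fun X =>
          (mul_nonneg (hζ0 X) (sq_nonneg _)).trans (hyoung X)).symm
    _ ≤ ENNReal.ofReal (N * ν.real (tsupport ζ)) := by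
        rw [integral_add (hf.const_mul _) hconst, integral_const_mul, setIntegral_const,
          smul_eq_mul, mul_comm (ν.real _)]
        gcongr
        have hc2 : 0 ≤ 2 / c := by positivity
        nlinarith [mul_nonneg hc2 hf0]
    _ = _ := by
        rw [ENNReal.ofReal_mul (by positivity), ofReal_measureReal hν]

end Caccioppoli

section Cutoff

theorem hasDerivAt_sq_max_zero (t : ℝ) :
    HasDerivAt (fun t : ℝ => max t 0 ^ 2) (2 * max t 0) t := by
  have hsq : HasDerivAt (fun t : ℝ => t ^ 2) (2 * t) t := by simpa using hasDerivAt_pow 2 t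
  rcases lt_trichotomy t 0 with ht | rfl | ht
  · rw [max_eq_right ht.le, mul_zero]
    refine (hasDerivAt_const t (0 : ℝ)).congr_of_eventuallyEq ?_
    filter_upwards [eventually_lt_nhds ht] with x hx
    simp [max_eq_right hx.le]
  · rw [max_self, mul_zero, ← hasDerivWithinAt_univ, ← Iic_union_Ici (a := (0 : ℝ))]
    refine HasDerivWithinAt.union ?_ ?_
    · refine (hasDerivWithinAt_const _ _ (0 : ℝ)).congr (fun x hx => ?_) (by simp)
      simp [max_eq_right (mem_Iic.1 hx)]
    · rw [mul_zero] at hsq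
      refine hsq.hasDerivWithinAt.congr (fun x hx => ?_) (by simp)
      simp [max_eq_left (mem_Ici.1 hx)]
  · rw [max_eq_left ht.le]
    refine hsq.congr_of_eventuallyEq ?_
    filter_upwards [eventually_gt_nhds ht] with x hx
    simp [max_eq_left hx.le]

theorem contDiff_sq_max_zero : ContDiff ℝ 1 fun t : ℝ => max t 0 ^ 2 := by
  rw [contDiff_one_iff_deriv]
  refine ⟨fun t => (hasDerivAt_sq_max_zero t).differentiableAt, ?_⟩
  rw [funext fun t => (hasDerivAt_sq_max_zero t).deriv]
  fun_prop

theorem exists_contDiff_cutoff (F : Type*) [NormedAddCommGroup F] [NormedSpace ℝ F]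
    [FiniteDimensional ℝ F] {κ : ℝ} (hκ : 1 < κ) :
    ∃ K : ℝ, 0 ≤ K ∧ ∀ (c : F) (r : ℝ), 0 < r → ∃ ψ : F → ℝ, ContDiff ℝ 1 ψ ∧
      (∀ X, ψ X ∈ Icc 0 1) ∧ EqOn ψ 1 (closedBall c r) ∧
      tsupport ψ ⊆ closedBall c (κ * r) ∧ ∀ X, ‖fderiv ℝ ψ X‖ ≤ K / r := by
  let β : ContDiffBump (0 : F) := ⟨1, κ, one_pos, hκ⟩
  obtain ⟨K, hK⟩ := (β.hasCompactSupport.fderiv (𝕜 := ℝ)).exists_bound_of_continuous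
    (β.contDiff.continuous_fderiv (n := 1) one_ne_zero)
  refine ⟨K, (norm_nonneg _).trans (hK 0), fun c r hr => ?_⟩
  have hnorm (X : F) : ‖r⁻¹ • (X - c)‖ = r⁻¹ * dist X c := by
    rw [norm_smul, Real.norm_of_nonneg (by positivity), dist_eq_norm]
  refine ⟨fun X => β (r⁻¹ • (X - c)), β.contDiff.comp (by fun_prop),
    fun X => ⟨β.nonneg, β.le_one⟩, fun X hX => β.one_of_mem_closedBall ?_,
    closure_minimal (fun X hX => ?_) isClosed_closedBall, fun X => ?_⟩
  · rw [mem_closedBall_zero_iff, hnorm, inv_mul_le_iff₀ hr]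
    simpa [β] using hX
  · have hball : r⁻¹ • (X - c) ∈ ball (0 : F) κ := by
      rw [← β.support_eq]
      exact hX
    rw [mem_ball_zero_iff, hnorm, inv_mul_lt_iff₀ hr, mul_comm] at hball
    exact hball.le
  · rw [fderiv_comp_sub (f := fun X => β (r⁻¹ • X)), fderiv_comp_smul, norm_smul,
      Real.norm_of_nonneg (by positivity), div_eq_inv_mul]
    gcongr
    exact hK _

variable {E : Type*} [NormedAddCommGroup E] {ψ : E × ℝ → ℝ}

theorem snd_le_of_mem_closedBall {y : E} {R : ℝ} {X : E × ℝ} (hX : X ∈ closedBall (y, 0) R) :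
    X.2 ≤ R := by
  rw [← closedBall_prod_same] at hX
  exact (le_abs_self _).trans (by simpa using hX.2)

theorem tsupport_sq_max_snd_sub_mul_sq_subset {y : E} {R : ℝ}
    (hψ : tsupport ψ ⊆ closedBall (y, 0) R) (ε : ℝ) :
    tsupport (fun X : E × ℝ => max (X.2 - ε) 0 ^ 2 * ψ X ^ 2) ⊆ closedBall y R ×ˢ Icc ε R := by
  refine closure_minimal (fun X hX => ?_) (isClosed_closedBall.prod isClosed_Icc)
  obtain ⟨hmax, hψX⟩ : max (X.2 - ε) 0 ≠ 0 ∧ ψ X ≠ 0 := by simpa using hX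
  have hε : ε ≤ X.2 := le_of_not_ge fun h => hmax (max_eq_right (by linarith))
  have hball := hψ (subset_tsupport ψ hψX)
  refine ⟨?_, hε, snd_le_of_mem_closedBall hball⟩
  rw [← closedBall_prod_same] at hball
  exact hball.1

variable [NormedSpace ℝ E]

theorem fderiv_sq_max_snd_sub_mul_sq {X : E × ℝ} (hψ : DifferentiableAt ℝ ψ X) (ε : ℝ) :
    fderiv ℝ (fun X => max (X.2 - ε) 0 ^ 2 * ψ X ^ 2) X =
      (2 * (max (X.2 - ε) 0 * ψ X)) •
        (ψ X • ContinuousLinearMap.snd ℝ E ℝ + max (X.2 - ε) 0 • fderiv ℝ ψ X) := by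
  have hmax := (hasDerivAt_sq_max_zero (X.2 - ε)).comp_hasFDerivAt X
    ((hasFDerivAt_snd (𝕜 := ℝ) (p := X)).sub_const ε)
  refine ((hmax.mul (hψ.hasFDerivAt.pow 2)).congr_fderiv ?_).fderiv
  ext v <;> simp <;> ring

theorem sq_norm_fderiv_sq_max_snd_sub_mul_sq_le {X : E × ℝ} (hψ : DifferentiableAt ℝ ψ X)
    (hψ1 : |ψ X| ≤ 1) {ε K : ℝ} (hK : ψ X ≠ 0 → max (X.2 - ε) 0 * ‖fderiv ℝ ψ X‖ ≤ K) :
    ‖fderiv ℝ (fun X => max (X.2 - ε) 0 ^ 2 * ψ X ^ 2) X‖ ^ 2 ≤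
      4 * (1 + K) ^ 2 * (max (X.2 - ε) 0 ^ 2 * ψ X ^ 2) := by
  rw [fderiv_sq_max_snd_sub_mul_sq hψ]
  rcases eq_or_ne (ψ X) 0 with h0 | h0
  · simp [h0]
  have hs : 0 ≤ max (X.2 - ε) 0 := le_max_right _ _
  have hbound : ‖ψ X • ContinuousLinearMap.snd ℝ E ℝ + max (X.2 - ε) 0 • fderiv ℝ ψ X‖ ≤
      1 + K := by
    refine (norm_add_le _ _).trans (add_le_add ?_ ?_)
    · rw [norm_smul]
      exact mul_le_one₀ hψ1 (norm_nonneg _) (ContinuousLinearMap.norm_snd_le _ _ _)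
    · rw [norm_smul, Real.norm_of_nonneg hs]
      exact hK h0
  rw [norm_smul, mul_pow, Real.norm_eq_abs, sq_abs]
  calc _ ≤ (2 * (max (X.2 - ε) 0 * ψ X)) ^ 2 * (1 + K) ^ 2 := by gcongr
    _ = _ := by ring

theorem exists_halfCylinder_cutoff (E : Type*) [NormedAddCommGroup E] [NormedSpace ℝ E]
    [FiniteDimensional ℝ E] :
    ∃ M : ℝ, 0 ≤ M ∧ ∀ (y : E) (r ε : ℝ), 0 < r → 0 < ε → ∃ ζ : E × ℝ → ℝ, ContDiff ℝ 1 ζ ∧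
      HasCompactSupport ζ ∧ tsupport ζ ⊆ halfCylinder y (2 * r) ∧ (∀ X, 0 ≤ ζ X) ∧
      (∀ X, ‖fderiv ℝ ζ X‖ ^ 2 ≤ M * ζ X) ∧
      ∀ X ∈ halfCylinder y r, 2 * ε ≤ X.2 → X.2 ^ 2 ≤ 4 * ζ X := by
  obtain ⟨K, hK, hcutoff⟩ := exists_contDiff_cutoff (E × ℝ) (κ := 3 / 2) (by norm_num)
  refine ⟨4 * (1 + 3 / 2 * K) ^ 2, by positivity, fun y r ε hr hε => ?_⟩
  obtain ⟨ψ, hψ, hψ01, hψ1, hψsupp, hψK⟩ := hcutoff (y, 0) r hr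
  have hsupp := tsupport_sq_max_snd_sub_mul_sq_subset hψsupp ε
  refine ⟨fun X => max (X.2 - ε) 0 ^ 2 * ψ X ^ 2,
    (contDiff_sq_max_zero.comp (by fun_prop : ContDiff ℝ 1 fun X : E × ℝ => X.2 - ε)).mul
      (hψ.pow 2),
    ((isCompact_closedBall _ _).prod isCompact_Icc).of_isClosed_subset (isClosed_tsupport _) hsupp,
    hsupp.trans (prod_mono (closedBall_subset_ball (by linarith)) fun t ht =>
      ⟨by linarith [ht.1], by linarith [ht.2]⟩), fun X => by positivity,
    fun X => sq_norm_fderiv_sq_max_snd_sub_mul_sq_le (hψ.differentiable one_ne_zero X)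
      (by rw [abs_of_nonneg (hψ01 X).1]; exact (hψ01 X).2) fun hX => ?_, fun X hX hXε => ?_⟩
  · have hmax : max (X.2 - ε) 0 ≤ 3 / 2 * r :=
      max_le (by linarith [snd_le_of_mem_closedBall (hψsupp (subset_tsupport ψ hX))])
        (by positivity)
    calc max (X.2 - ε) 0 * ‖fderiv ℝ ψ X‖ ≤ 3 / 2 * r * (K / r) := by
          gcongr
          exact hψK X
      _ = 3 / 2 * K := by field_simp
  · have hball : X ∈ closedBall (y, 0) r := by
      rw [← closedBall_prod_same]
      exact ⟨(mem_ball.1 hX.1).le, by simpa [abs_of_pos hX.2.1] using hX.2.2.le⟩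
    simp only [hψ1 hball, Pi.one_apply, max_eq_left (show 0 ≤ X.2 - ε by linarith)]
    nlinarith

end Cutoff

section LogarithmBMO

set_option maxSynthPendingDepth 3

variable {E : Type*} [NormedAddCommGroup E]

theorem setLIntegral_halfCylinder_le_of_forall_height [MeasurableSpace E] {ν : Measure (E × ℝ)}
    {y : E} {r : ℝ} {g : E × ℝ → ℝ≥0∞} {B : ℝ≥0∞}
    (h : ∀ ε : ℝ, 0 < ε → ∫⁻ X in halfCylinder y r ∩ {X | 2 * ε ≤ X.2}, g X ∂ν ≤ B) :
    ∫⁻ X in halfCylinder y r, g X ∂ν ≤ B := by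
  let S : ℕ → Set (E × ℝ) := fun j => halfCylinder y r ∩ {X | 2 * (1 / ((j : ℝ) + 1)) ≤ X.2}
  have hunion : halfCylinder y r = ⋃ j, S j := by
    refine Subset.antisymm (fun X hX => ?_) (iUnion_subset fun j => inter_subset_left)
    obtain ⟨j, hj⟩ := exists_nat_one_div_lt (half_pos hX.2.1)
    exact mem_iUnion.2 ⟨j, hX, show 2 * (1 / ((j : ℝ) + 1)) ≤ X.2 by linarith⟩
  have hmono : Monotone S := fun i j hij =>
    inter_subset_inter_right _ fun X (hX : 2 * (1 / ((i : ℝ) + 1)) ≤ X.2) =>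
      le_trans (by gcongr) hX
  rw [hunion, setLIntegral_iUnion_of_directed _ hmono.directed_le]
  exact iSup_le fun j => h _ (by positivity)

theorem setLIntegral_height_sq_mul_le [MeasurableSpace E] [OpensMeasurableSpace E]
    {ν : Measure (E × ℝ)} {y : E} {r ε : ℝ} {ζ N : E × ℝ → ℝ} (hN : ∀ X, 0 ≤ N X)
    (hζ : ∀ X ∈ halfCylinder y r, 2 * ε ≤ X.2 → X.2 ^ 2 ≤ 4 * ζ X) :
    ∫⁻ X in halfCylinder y r ∩ {X | 2 * ε ≤ X.2}, ENNReal.ofReal (X.2 ^ 2 * N X) ∂ν ≤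
      4 * ∫⁻ X in tsupport ζ, ENNReal.ofReal (ζ X * N X) ∂ν := by
  have hsub : halfCylinder y r ∩ {X | 2 * ε ≤ X.2} ⊆ tsupport ζ := by
    rintro X ⟨hX, hXε⟩
    refine subset_tsupport ζ fun h0 => ?_
    have := hζ X hX hXε
    nlinarith [hX.2.1]
  rw [← lintegral_const_mul' _ _ ENNReal.ofNat_ne_top]
  refine (setLIntegral_mono' ?_ fun X hX => ?_).trans (lintegral_mono_set hsub)
  · exact (measurableSet_ball.prod measurableSet_Ioo).inter
      (measurableSet_le measurable_const measurable_snd)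
  · rw [← ENNReal.ofReal_ofNat, ← ENNReal.ofReal_mul (by norm_num), ← mul_assoc]
    gcongr
    · exact hN X
    · exact hζ X hX.1 hX.2

theorem setLIntegral_weightedVolume_add_one_le [MeasureSpace E] [BorelSpace E]
    {α r : ℝ} {y : E} {N : E × ℝ → ℝ} :
    ∫⁻ X in halfCylinder y r, ENNReal.ofReal (N X) ∂weightedVolume E (α + 1) ≤
      weightedVolume E α (halfCylinder y r) +
        ∫⁻ X in halfCylinder y r, ENNReal.ofReal (X.2 ^ 2 * N X ^ 2) ∂weightedVolume E α := by
  have hmeas := measurableSet_halfCylinder y r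
  rw [← setLIntegral_one, ← lintegral_add_left measurable_const,
    setLIntegral_weightedVolume _ hmeas, setLIntegral_weightedVolume _ hmeas]
  refine setLIntegral_mono' hmeas fun X hX => ?_
  have ht : 0 < X.2 := hX.2.1
  rw [rpow_add_one ht.ne', ENNReal.ofReal_mul (by positivity), mul_assoc]
  gcongr
  rw [← ENNReal.ofReal_mul ht.le, ← ENNReal.ofReal_one,
    ← ENNReal.ofReal_add zero_le_one (by positivity)]
  gcongr
  nlinarith [sq_nonneg (X.2 * N X - 1)]

variable [NormedSpace ℝ E] [FiniteDimensional ℝ E] [MeasureSpace E] [BorelSpace E]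
  [(volume : Measure E).IsAddHaarMeasure]
  {A : (E × ℝ →L[ℝ] ℝ) →L[ℝ] (E × ℝ →L[ℝ] ℝ) →L[ℝ] ℝ} {α : ℝ}

theorem exists_halfCylinder_caccioppoli_log (hα : -1 < α) (hA : IsCoercive A) :
    ∃ C : ℝ≥0∞, C ≠ ∞ ∧ ∀ (Ω : Set (E × ℝ)) (P : E × ℝ → ℝ), IsOpen Ω → ContDiffOn ℝ 1 P Ω →
      (∀ X ∈ Ω, 0 < P X) → IsWeakSupersolOn A (weightedVolume E α) Ω P →
      ∀ (y : E) (r : ℝ), 0 < r → halfCylinder y (2 * r) ⊆ Ω →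
        ∫⁻ X in halfCylinder y r, ENNReal.ofReal (X.2 ^ 2 *
            ‖fderiv ℝ (fun X => log (P X)) X‖ ^ 2) ∂weightedVolume E α ≤
          C * weightedVolume E α (halfCylinder y r) := by
  obtain ⟨c, hc, hcA⟩ := hA
  obtain ⟨M, hM, hcutoff⟩ := exists_halfCylinder_cutoff E
  set D : ℝ := 2 ^ Module.finrank ℝ E * 2 ^ (α + 1)
  refine ⟨4 * (ENNReal.ofReal (‖A‖ ^ 2 * M / c ^ 2) * ENNReal.ofReal D), by finiteness, ?_⟩
  intro Ω P hΩ hP hpos hsup y r hr hsub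
  refine setLIntegral_halfCylinder_le_of_forall_height fun ε hε => ?_
  obtain ⟨ζ, hζ, hcompact, hsupp, hζ0, hgrad, hheight⟩ := hcutoff y r ε hr hε
  have hν : weightedVolume E α (tsupport ζ) ≠ ∞ := measure_ne_top_of_subset hsupp
    (weightedVolume_halfCylinder_ne_top hα (by positivity))
  calc ∫⁻ X in halfCylinder y r ∩ {X | 2 * ε ≤ X.2}, ENNReal.ofReal (X.2 ^ 2 *
          ‖fderiv ℝ (fun X => log (P X)) X‖ ^ 2) ∂weightedVolume E α
      ≤ 4 * ∫⁻ X in tsupport ζ, ENNReal.ofReal (ζ X *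
          ‖fderiv ℝ (fun X => log (P X)) X‖ ^ 2) ∂weightedVolume E α :=
        setLIntegral_height_sq_mul_le (fun X => sq_nonneg _) hheight
    _ ≤ 4 * (ENNReal.ofReal (‖A‖ ^ 2 * M / c ^ 2) * weightedVolume E α (tsupport ζ)) := by
        gcongr
        exact hsup.lintegral_mul_sq_norm_fderiv_log_le hc
          (fun L => by simpa only [sq, mul_assoc] using hcA L) hΩ hP hpos hζ hcompact
          (hsupp.trans hsub) hζ0 hM hgrad hν
    _ ≤ 4 * (ENNReal.ofReal (‖A‖ ^ 2 * M / c ^ 2) *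
          weightedVolume E α (halfCylinder y (2 * r))) := by gcongr
    _ = _ := by
        rw [weightedVolume_halfCylinder_two_mul hα hr]
        ring

theorem log_bmo_general (hα : -1 < α) (hA : IsCoercive A) :
    ∃ C > 0, ∀ (Ω : Set (E × ℝ)) (P : E × ℝ → ℝ), IsOpen Ω → ContDiffOn ℝ 1 P Ω →
      (∀ X ∈ Ω, 0 < P X) → IsWeakSupersolOn A (weightedVolume E α) Ω P →
      ∀ (y : E) (r : ℝ), 0 < r → halfCylinder y (2 * r) ⊆ Ω →
        IntegrableOn (fun X => log (P X)) (halfCylinder y r) (weightedVolume E α) ∧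
          ⨍ X in halfCylinder y r, |log (P X) - ⨍ Y in halfCylinder y r, log (P Y)
            ∂weightedVolume E α| ∂weightedVolume E α ≤ C := by
  obtain ⟨C, hC, hcaccioppoli⟩ := exists_halfCylinder_caccioppoli_log hα hA
  set K : ℝ≥0∞ := ENNReal.ofReal (2 ^ (α + 1) / (α + 1)) *
    (1 + 4 * 2 ^ Module.finrank ℝ (E × ℝ)) * (1 + C)
  refine ⟨2 * K.toReal + 1, by positivity, fun Ω P hΩ hP hpos hsup y r hr hsub => ?_⟩
  have hW : ContDiffOn ℝ 1 (fun X => log (P X)) (halfCylinder y r) :=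
    (hP.log fun X hX => (hpos X hX).ne').mono
      ((prod_mono (ball_subset_ball (by linarith))
        (Ioo_subset_Ioo_right (by linarith))).trans hsub)
  obtain ⟨c, hc⟩ := exists_halfCylinder_poincare hα hr hW
  have hmean : ∫⁻ X in halfCylinder y r, ‖log (P X) - c‖ₑ ∂weightedVolume E α ≤
      K * (weightedVolume E α).restrict (halfCylinder y r) univ := by
    refine hc.trans ?_
    rw [Measure.restrict_apply_univ, mul_assoc _ (1 + C), one_add_mul]
    gcongr
    simp_rw [← ofReal_norm]
    exact setLIntegral_weightedVolume_add_one_le.trans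
      (by grw [hcaccioppoli Ω P hΩ hP hpos hsup y r hr hsub])
  have : IsFiniteMeasure ((weightedVolume E α).restrict (halfCylinder y r)) :=
    isFiniteMeasure_restrict.2 (weightedVolume_halfCylinder_ne_top hα hr.le)
  have : NeZero ((weightedVolume E α).restrict (halfCylinder y r)) :=
    ⟨Measure.restrict_eq_zero.not.2 (weightedVolume_halfCylinder_ne_zero hα hr)⟩
  obtain ⟨hint, hbmo⟩ := integrable_and_average_norm_sub_average_le
    (hW.continuousOn.aestronglyMeasurable (measurableSet_halfCylinder y r))
    (show K ≠ ∞ by finiteness) hmean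
  exact ⟨hint, by simpa only [Real.norm_eq_abs] using hbmo.trans (by linarith)⟩

end LogarithmBMO

section GradForm

set_option maxSynthPendingDepth 3

theorem isCoercive_of_forall_pos {V : Type*} [NormedAddCommGroup V] [NormedSpace ℝ V]
    [FiniteDimensional ℝ V] {B : V →L[ℝ] V →L[ℝ] ℝ} (hB : ∀ u, u ≠ 0 → 0 < B u u) :
    IsCoercive B := by
  have hcont : Continuous fun u => B u u := by fun_prop
  rcases (sphere (0 : V) 1).eq_empty_or_nonempty with hempty | hnonempty
  · have : Subsingleton V := not_nontrivial_iff_subsingleton.1 fun _ =>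
      (NormedSpace.sphere_nonempty.2 zero_le_one).ne_empty hempty
    exact ⟨1, one_pos, fun u => by simp [Subsingleton.elim u 0]⟩
  obtain ⟨v, hv, hmin⟩ := (isCompact_sphere (0 : V) 1).exists_isMinOn hnonempty hcont.continuousOn
  refine ⟨B v v, hB v (ne_zero_of_mem_unit_sphere ⟨v, hv⟩), fun u => ?_⟩
  rcases eq_or_ne u 0 with rfl | hu
  · simp
  have hunit : ‖u‖⁻¹ • u ∈ sphere (0 : V) 1 := by
    rw [mem_sphere_zero_iff_norm, norm_smul, norm_inv, norm_norm,
      inv_mul_cancel₀ (norm_ne_zero_iff.2 hu)]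
  calc B v v * ‖u‖ * ‖u‖ ≤ B (‖u‖⁻¹ • u) (‖u‖⁻¹ • u) * ‖u‖ * ‖u‖ := by
        gcongr
        exact hmin hunit
    _ = B u u := by
        have hu' : ‖u‖ ≠ 0 := norm_ne_zero_iff.2 hu
        simp only [map_smul, smul_apply, smul_eq_mul]
        field_simp

/-- The Euclidean inner product on covectors of `ℝⁿ × ℝ`, as the bilinear form underlying
`gradDot`. -/
def gradForm (n : ℕ) : (Pt n →L[ℝ] ℝ) →L[ℝ] (Pt n →L[ℝ] ℝ) →L[ℝ] ℝ :=
  let eval (v : Pt n) : (Pt n →L[ℝ] ℝ) →L[ℝ] ℝ := ContinuousLinearMap.apply ℝ ℝ v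
  (∑ i, (eval (EuclideanSpace.single i 1, 0)).smulRight (eval (EuclideanSpace.single i 1, 0))) +
    (eval (0, 1)).smulRight (eval (0, 1))

theorem gradForm_apply {n : ℕ} (L M : Pt n →L[ℝ] ℝ) :
    gradForm n L M =
      (∑ i, L (EuclideanSpace.single i 1, 0) * M (EuclideanSpace.single i 1, 0)) +
        L (0, 1) * M (0, 1) := by
  simp [gradForm]

theorem isCoercive_gradForm (n : ℕ) : IsCoercive (gradForm n) := by
  refine isCoercive_of_forall_pos fun L hL => ?_
  have hnonneg : 0 ≤ gradForm n L L := by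
    rw [gradForm_apply]
    exact add_nonneg (Finset.sum_nonneg fun i _ => mul_self_nonneg _) (mul_self_nonneg _)
  refine hnonneg.lt_of_ne fun hzero => hL ?_
  rw [gradForm_apply, eq_comm, add_eq_zero_iff_of_nonneg
    (Finset.sum_nonneg fun i _ => mul_self_nonneg _) (mul_self_nonneg _),
    Finset.sum_eq_zero_iff_of_nonneg fun i _ => mul_self_nonneg _] at hzero
  refine ContinuousLinearMap.prod_ext ?_ ?_
  · refine ContinuousLinearMap.coe_injective
      ((EuclideanSpace.basisFun (Fin n) ℝ).toBasis.ext fun i => ?_)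
    simpa using hzero.1 i (Finset.mem_univ i)
  · ext
    simpa using hzero.2

theorem IsWeakSupersol.isWeakSupersolOn {n : ℕ} {σ : ℝ} {U : Pt n → ℝ}
    {a b : EuclideanSpace ℝ (Fin n) → ℝ} (h : IsWeakSupersol n σ U a b) :
    IsWeakSupersolOn (gradForm n) (weightedVolume _ (1 - 2 * σ)) (Q n 1) U := by
  intro φ hφ hcompact hsupp hφ0
  have hbottom (x : EuclideanSpace ℝ (Fin n)) : φ (x, 0) = 0 :=
    image_eq_zero_of_notMem_tsupport fun hx => lt_irrefl _ (hsupp hx).2.1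
  have htest := h φ hφ hcompact (hsupp.trans subset_union_left) hφ0
  simp only [hbottom, mul_zero, integral_zero, add_zero] at htest
  have hQ : MeasurableSet (Q n 1) := measurableSet_halfCylinder 0 1
  rw [setIntegral_weightedVolume _ hQ fun X hX => hX.2.1]
  simpa only [gradForm_apply, gradDot] using neg_nonpos.1 htest

end GradForm

/-- **BMO estimate for `W = log(U + k)`** with respect to the weight
`ω(X) = t^{1−2σ}`: if `U ≥ 0` is a weak supersolution with finite weighted energy
and `k ≥ ‖b‖_{L^∞(B₁)}`, `k > 0`, then for every box `Q_r(y) = B_r(y) × (0, r)`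
with `B_{2r}(y) × (0, 2r) ⊆ Q₁`,
`ω(Q_r(y))⁻¹ ∫_{Q_r(y)} |W − W_{y,r}| ω ≤ C`, where
`W_{y,r} = ω(Q_r(y))⁻¹ ∫_{Q_r(y)} W ω` and `C = C(n, σ, ‖a‖_{L^∞(B₁)})`. -/
theorem log_bmo (n : ℕ) (hn : 2 ≤ n) (σ : ℝ) (hσ0 : 0 < σ) (hσ1 : σ < 1)
    (Ma : ℝ) :
    ∃ C > 0, ∀ (U : Pt n → ℝ) (a b : EuclideanSpace ℝ (Fin n) → ℝ) (Mb k : ℝ),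
      ContDiffOn ℝ 1 U (Q n 1 ∪ Q' n 1) →
      (∀ X ∈ Q n 1 ∪ Q' n 1, 0 ≤ U X) →
      IntegrableOn (fun X : Pt n =>
        X.2 ^ (1 - 2 * σ) * ((U X) ^ 2 + ‖fderiv ℝ U X‖ ^ 2)) (Q n 1) →
      Measurable a → Measurable b →
      (∀ x ∈ ball (0 : EuclideanSpace ℝ (Fin n)) 1, |a x| ≤ Ma) →
      (∀ x ∈ ball (0 : EuclideanSpace ℝ (Fin n)) 1, |b x| ≤ Mb) →
      IsWeakSupersol n σ U a b →
      0 < k → Mb ≤ k →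
      ∀ (y : EuclideanSpace ℝ (Fin n)) (r : ℝ), 0 < r →
        y ∈ ball (0 : EuclideanSpace ℝ (Fin n)) 1 →
        (ball y (2 * r)) ×ˢ (Ioo (0 : ℝ) (2 * r)) ⊆ Q n 1 →
        (∫ X in (ball y r) ×ˢ (Ioo (0 : ℝ) r),
            |Real.log (U X + k) -
              (∫ Y in (ball y r) ×ˢ (Ioo (0 : ℝ) r),
                  Real.log (U Y + k) * Y.2 ^ (1 - 2 * σ)) /
                (∫ Y in (ball y r) ×ˢ (Ioo (0 : ℝ) r), Y.2 ^ (1 - 2 * σ))|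
              * X.2 ^ (1 - 2 * σ)) /
          (∫ Y in (ball y r) ×ˢ (Ioo (0 : ℝ) r), Y.2 ^ (1 - 2 * σ)) ≤ C := by
  obtain ⟨C, hC, hbmo⟩ := log_bmo_general (α := 1 - 2 * σ) (by linarith) (isCoercive_gradForm n)
  refine ⟨C, hC, fun U a b _ k hU hU0 _ _ _ _ _ hsup hk _ y r hr _ hsub => ?_⟩
  have hmean := (hbmo (Q n 1) (fun X => U X + k) (isOpen_halfCylinder 0 1)
    ((hU.mono subset_union_left).add contDiffOn_const)
    (fun X hX => add_pos_of_nonneg_of_pos (hU0 X (Or.inl hX)) hk)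
    (hsup.isWeakSupersolOn.add_const k) y r hr hsub).2
  simp only [setAverage_weightedVolume _ (measurableSet_halfCylinder y r) fun _ hX => hX.2.1]
    at hmean
  exact hmean
end
end

section
/- Let 0 < σ < 1, n > 2σ, R > 0 and 0 < δ < R. Let u : ℝⁿ → ℝ be continuous, bounded, nonnegative on all of ℝⁿ, and C² on B_R, and let a be a bounded measurable function on ℝⁿ. Suppose that for every x ∈ B_R the principal value lim_{ε→0⁺} ∫_{{y : |y−x| > ε}} ( u(x) − u(y) ) / |x−y|^{n+2σ} dy exists and equals a(x) u(x). Then there exists a constant C > 0 depending only on n, σ, δ, R and ‖a‖_{L^∞(ℝⁿ)} such that max_{B̄_{R−δ}} u ≤ C min_{B̄_{R−δ}} u. -/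
open MeasureTheory Metric Set Real

/-!
Let `d` be the dimension and `p = d + 2σ`. The principal value dominates an absolutely convergent
integral as soon as `u` is touched from above at `x` by a quadratic near `x`: replacing
`‖z‖ ^ (-p)` by the kernel truncated at scale `r` costs only the quadratic term, because the linear
term is odd. Touching `u` from below by a multiple of `ρ² - ‖y‖²` then bounds the weighted mean of
`u` by `u y`. Touching it from above by a multiple of `(ρ² - ‖y‖²) ^ (-d)` and truncating at a scale
`r` proportional to `ρ² - ‖x‖²` bounds `u y` by the same weighted mean: the exponent `d` is the one
for which the factor `r ^ d` of the rescaled mean matches the blow-up of the barrier.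
-/

namespace FractionalHarnack

open Module Filter Topology

lemma rpow_neg_le_mul_rpow_neg {a b c p : ℝ} (hp : 0 ≤ p) (ha : 0 < a) (hb : 0 < b)
    (h : b ≤ c * a) : a ^ (-p) ≤ c ^ p * b ^ (-p) := by
  have hc : 0 < c := pos_of_mul_pos_left (hb.trans_le h) ha.le
  calc a ^ (-p) = c ^ p * (c * a) ^ (-p) := by
        rw [mul_rpow hc.le ha.le, ← mul_assoc, ← rpow_add hc, add_neg_cancel, rpow_zero, one_mul]
    _ ≤ c ^ p * b ^ (-p) :=
        mul_le_mul_of_nonneg_left (rpow_le_rpow_of_nonpos hb h (neg_nonpos.2 hp))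
          (rpow_nonneg hc.le p)

/-- The kernel `‖z‖ ^ (-p)` of the fractional Laplacian, made bounded by truncation at radius `1`.
It also serves as the weight of the class of functions whose fractional Laplacian makes sense. -/
noncomputable def truncKernel {E : Type*} [Norm E] (p : ℝ) (z : E) : ℝ :=
  max 1 ‖z‖ ^ (-p)

/-- The part `‖z‖ ^ (-p) - max 1 ‖z‖ ^ (-p)` of the kernel removed by truncation. It is supported
in the unit ball. Its value at `0` is irrelevant: for `p ≠ 0` it is `-1`, since `0 ^ (-p) = 0`. -/
noncomputable def singularKernel {E : Type*} [Norm E] (p : ℝ) (z : E) : ℝ :=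
  ‖z‖ ^ (-p) - truncKernel p z

section Kernel

variable {E : Type*} [NormedAddCommGroup E] {p : ℝ}

lemma truncKernel_pos (z : E) : 0 < truncKernel p z :=
  rpow_pos_of_pos (zero_lt_one.trans_le (le_max_left _ _)) _

lemma continuous_truncKernel : Continuous (truncKernel p : E → ℝ) :=
  (continuous_const.max continuous_norm).rpow_const
    fun _ => Or.inl (zero_lt_one.trans_le (le_max_left _ _)).ne'

lemma truncKernel_add_singularKernel (z : E) :
    truncKernel p z + singularKernel p z = ‖z‖ ^ (-p) :=
  add_sub_cancel _ _

lemma measurable_singularKernel [MeasurableSpace E] [BorelSpace E] :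
    Measurable (singularKernel p : E → ℝ) :=
  (measurable_norm.pow_const _).sub continuous_truncKernel.measurable

lemma singularKernel_neg (z : E) : singularKernel p (-z) = singularKernel p z := by
  simp only [singularKernel, truncKernel, norm_neg]

lemma singularKernel_of_one_le_norm {z : E} (hz : 1 ≤ ‖z‖) : singularKernel p z = 0 := by
  rw [singularKernel, truncKernel, max_eq_right hz, sub_self]

lemma singularKernel_nonneg (hp : 0 ≤ p) {z : E} (hz : z ≠ 0) : 0 ≤ singularKernel p z :=
  sub_nonneg.2 <|
    rpow_le_rpow_of_nonpos (norm_pos_iff.2 hz) (le_max_right _ _) (neg_nonpos.2 hp)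

lemma singularKernel_mul_norm_sq_nonneg (hp : 0 ≤ p) (z : E) :
    0 ≤ singularKernel p z * ‖z‖ ^ 2 := by
  rcases eq_or_ne z 0 with rfl | hz
  · simp
  · exact mul_nonneg (singularKernel_nonneg hp hz) (sq_nonneg _)

lemma truncKernel_mul_sub_singularKernel_mul_le (hp : 0 ≤ p) {z : E} (hz : z ≠ 0) {a b : ℝ}
    (h : ‖z‖ < 1 → -a ≤ b) :
    truncKernel p z * a - singularKernel p z * b ≤ ‖z‖ ^ (-p) * a := by
  rw [← truncKernel_add_singularKernel]
  rcases le_or_gt 1 ‖z‖ with hz1 | hz1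
  · simp [singularKernel_of_one_le_norm hz1]
  · linarith [mul_le_mul_of_nonneg_left (h hz1) (singularKernel_nonneg hp hz)]

lemma truncKernel_le_mul_truncKernel_add_smul [NormedSpace ℝ E] (hp : 0 ≤ p) {r : ℝ}
    (hr : 0 ≤ r) (x z : E) :
    truncKernel p z ≤ (1 + ‖x‖ + r) ^ p * truncKernel p (x + r • z) := by
  have hz : 1 ≤ max 1 ‖z‖ := le_max_left _ _
  have hrz : r * ‖z‖ ≤ r * max 1 ‖z‖ := mul_le_mul_of_nonneg_left (le_max_right _ _) hr
  have hxz : ‖x‖ ≤ ‖x‖ * max 1 ‖z‖ := le_mul_of_one_le_right (norm_nonneg x) hz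
  have hadd : ‖x + r • z‖ ≤ ‖x‖ + r * ‖z‖ := by
    simpa only [norm_smul, norm_of_nonneg hr] using norm_add_le x (r • z)
  refine rpow_neg_le_mul_rpow_neg hp (by positivity) (by positivity) (max_le ?_ ?_)
  · nlinarith [norm_nonneg x]
  · linarith

lemma norm_rpow_neg_le_mul_truncKernel (hp : 0 ≤ p) {ε : ℝ} (hε : 0 < ε) {z : E}
    (hz : ε ≤ ‖z‖) : ‖z‖ ^ (-p) ≤ (1 + ε⁻¹) ^ p * truncKernel p z := by
  have hone : 1 ≤ ε⁻¹ * ‖z‖ := (one_le_inv_mul₀ hε).2 hz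
  have hpos : 0 < ‖z‖ := hε.trans_le hz
  refine rpow_neg_le_mul_rpow_neg hp hpos (by positivity) (max_le ?_ ?_) <;> linarith

lemma integrableOn_norm_rpow_neg_mul [MeasurableSpace E] [BorelSpace E] {μ : Measure E} (hp : 0 ≤ p)
    {w : E → ℝ} (hw : Integrable (fun z => truncKernel p z * w z) μ) {ε : ℝ} (hε : 0 < ε) :
    IntegrableOn (fun z => ‖z‖ ^ (-p) * w z) {z | ε < ‖z‖} μ := by
  have hmeas : Measurable fun z : E => ‖z‖ ^ (-p) / truncKernel p z :=
    (measurable_norm.pow_const _).div continuous_truncKernel.measurable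
  refine (hw.integrableOn.bdd_mul (c := (1 + ε⁻¹) ^ p) hmeas.aestronglyMeasurable ?_).congr
    (Eventually.of_forall fun z => ?_)
  · filter_upwards [ae_restrict_mem (measurableSet_lt measurable_const measurable_norm)]
      with z (hz : ε < ‖z‖)
    rw [norm_of_nonneg (div_nonneg (by positivity) (truncKernel_pos z).le),
      div_le_iff₀ (truncKernel_pos z)]
    exact norm_rpow_neg_le_mul_truncKernel hp hε hz.le
  · simp only [← mul_assoc, div_mul_cancel₀ _ (truncKernel_pos (p := p) z).ne']

end Kernel

section Integral

variable {E : Type*} [NormedAddCommGroup E] [NormedSpace ℝ E] [FiniteDimensional ℝ E]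
  [MeasurableSpace E] [BorelSpace E] (μ : Measure E) [μ.IsAddHaarMeasure] {p : ℝ}

lemma pow_finrank_mul_integral_comp_add_smul (f : E → ℝ) (x : E) {r : ℝ} (hr : 0 < r) :
    r ^ finrank ℝ E * ∫ z, f (x + r • z) ∂μ = ∫ y, f y ∂μ := by
  rw [Measure.integral_comp_smul_of_nonneg μ (fun y => f (x + y)) r (hR := hr.le), smul_eq_mul,
    mul_inv_cancel_left₀ (by positivity), integral_add_left_eq_self f x]

lemma setIntegral_eq_zero_of_odd {f : E → ℝ} {s : Set E} (hs : MeasurableSet s)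
    (hneg : ∀ z, -z ∈ s ↔ z ∈ s) (hf : ∀ z, f (-z) = -f z) : ∫ z in s, f z ∂μ = 0 := by
  have hodd : ∀ z, s.indicator f (-z) = -s.indicator f z := fun z => by
    by_cases hz : z ∈ s <;> simp [indicator, hneg, hf, hz]
  have h := integral_neg_eq_self (s.indicator f) μ
  simp_rw [hodd, integral_neg, integral_indicator hs] at h
  linarith

lemma integrable_truncKernel (hp : (finrank ℝ E : ℝ) < p) :
    Integrable (truncKernel p : E → ℝ) μ := by
  have hp0 : 0 ≤ p := (Nat.cast_nonneg _).trans hp.le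
  refine ((integrable_one_add_norm (μ := μ) hp).const_mul (2 ^ p)).mono'
    continuous_truncKernel.aestronglyMeasurable (Eventually.of_forall fun z => ?_)
  rw [norm_of_nonneg (truncKernel_pos z).le]
  exact rpow_neg_le_mul_rpow_neg hp0 (by positivity) (by positivity)
    (by linarith [le_max_left 1 ‖z‖, le_max_right 1 ‖z‖])

lemma integral_truncKernel_pos (hp : (finrank ℝ E : ℝ) < p) :
    0 < ∫ z : E, truncKernel p z ∂μ :=
  integral_pos_of_integrable_nonneg_nonzero (x := 0) continuous_truncKernel
    (integrable_truncKernel μ hp) (fun z => (truncKernel_pos z).le) (truncKernel_pos 0).ne'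

lemma integrable_singularKernel_mul_norm_sq [Nontrivial E] (hp0 : 0 ≤ p)
    (hp : p < finrank ℝ E + 2) :
    Integrable (fun z : E => singularKernel p z * ‖z‖ ^ 2) μ := by
  have hsupp : Function.support (fun z : E => singularKernel p z * ‖z‖ ^ 2) ⊆ ball 0 1 :=
    Function.support_subset_iff'.2 fun z hz => by
      rw [singularKernel_of_one_le_norm (by simpa using hz), zero_mul]
  rw [← integrableOn_iff_integrable_of_support_subset hsupp]
  refine integrableOn_ball_of_norm_le_rpow (C := 1) (α := p - 2) finrank_pos (by linarith)
    (Eventually.of_forall fun z => ?_)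
    (measurable_singularKernel.mul (measurable_norm.pow_const 2)).aestronglyMeasurable
  rw [norm_of_nonneg (singularKernel_mul_norm_sq_nonneg hp0 z), one_mul]
  rcases eq_or_ne z 0 with rfl | hz
  · simpa using rpow_nonneg le_rfl _
  · rw [neg_sub, sub_eq_neg_add, rpow_add (norm_pos_iff.2 hz), rpow_two]
    gcongr
    exact sub_le_self _ (truncKernel_pos z).le

variable {μ}

lemma integrable_truncKernel_mul_comp_add_smul (hp : 0 ≤ p) {u : E → ℝ}
    (hu : Integrable (fun y => truncKernel p y * u y) μ) (x : E) {r : ℝ} (hr : 0 < r) :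
    Integrable (fun z => truncKernel p z * u (x + r • z)) μ := by
  have hcomp : Integrable (fun z => truncKernel p (x + r • z) * u (x + r • z)) μ :=
    (integrable_comp_smul_iff μ _ hr.ne').2 (hu.comp_add_left x)
  have hcont : Continuous fun z : E => truncKernel p z / truncKernel p (x + r • z) :=
    continuous_truncKernel.div (continuous_truncKernel.comp (by fun_prop))
      fun z => (truncKernel_pos _).ne'
  refine (hcomp.bdd_mul (c := (1 + ‖x‖ + r) ^ p) hcont.aestronglyMeasurable
    (Eventually.of_forall fun z => ?_)).congr (Eventually.of_forall fun z => ?_)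
  · rw [norm_of_nonneg (div_pos (truncKernel_pos _) (truncKernel_pos _)).le,
      div_le_iff₀ (truncKernel_pos _)]
    exact truncKernel_le_mul_truncKernel_add_smul hp hr.le x z
  · simp only [← mul_assoc, div_mul_cancel₀ _ (truncKernel_pos (p := p) (x + r • z)).ne']

lemma pow_mul_integral_truncKernel_mul_comp_add_smul_le (hp : 0 ≤ p) {u : E → ℝ}
    (hu : Integrable (fun y => truncKernel p y * u y) μ) (hu0 : ∀ y, 0 ≤ u y) (x : E) {r : ℝ}
    (hr : 0 < r) :
    r ^ finrank ℝ E * ∫ z, truncKernel p z * u (x + r • z) ∂μ ≤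
      (1 + ‖x‖ + r) ^ p * ∫ y, truncKernel p y * u y ∂μ := by
  have hcomp : Integrable (fun z => truncKernel p (x + r • z) * u (x + r • z)) μ :=
    (integrable_comp_smul_iff μ _ hr.ne').2 (hu.comp_add_left x)
  have hle : ∫ z, truncKernel p z * u (x + r • z) ∂μ ≤
      (1 + ‖x‖ + r) ^ p * ∫ z, truncKernel p (x + r • z) * u (x + r • z) ∂μ := by
    rw [← integral_const_mul]
    refine integral_mono (integrable_truncKernel_mul_comp_add_smul hp hu x hr)
      (hcomp.const_mul _) fun z => ?_
    rw [← mul_assoc]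
    exact mul_le_mul_of_nonneg_right (truncKernel_le_mul_truncKernel_add_smul hp hr.le x z)
      (hu0 _)
  rw [← pow_finrank_mul_integral_comp_add_smul μ (fun y => truncKernel p y * u y) x hr,
    mul_left_comm]
  exact mul_le_mul_of_nonneg_left hle (by positivity)

lemma integral_truncKernel_mul_le_comp_add (hp : 0 ≤ p) {u : E → ℝ}
    (hu : Integrable (fun y => truncKernel p y * u y) μ) (hu0 : ∀ y, 0 ≤ u y) (x : E) :
    ∫ y, truncKernel p y * u y ∂μ ≤
      (2 + ‖x‖) ^ p * ∫ z, truncKernel p z * u (x + z) ∂μ := by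
  have hux : Integrable (fun z => truncKernel p z * u (x + z)) μ := by
    simpa only [one_smul] using integrable_truncKernel_mul_comp_add_smul hp hu x one_pos
  have h := pow_mul_integral_truncKernel_mul_comp_add_smul_le hp hux (fun _ => hu0 _) (-x) one_pos
  simp only [one_pow, one_mul, one_smul, add_neg_cancel_left, norm_neg] at h
  rwa [add_right_comm, one_add_one_eq_two] at h

lemma integrableOn_singularKernel_mul_clm (hp : (finrank ℝ E : ℝ) < p) (ℓ : E →L[ℝ] ℝ) {ε : ℝ}
    (hε : 0 < ε) : IntegrableOn (fun z => singularKernel p z * ℓ z) {z | ε < ‖z‖} μ := by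
  have hp0 : 0 ≤ p := (Nat.cast_nonneg _).trans hp.le
  have htrunc := integrable_truncKernel μ hp
  have hsing : IntegrableOn (singularKernel p : E → ℝ) {z | ε < ‖z‖} μ := by
    have h := integrableOn_norm_rpow_neg_mul hp0 (w := fun _ => 1) (by simpa using htrunc) hε
    simp only [mul_one] at h
    exact h.sub htrunc.integrableOn
  refine (hsing.norm.mul_const ‖ℓ‖).mono'
    (measurable_singularKernel.mul ℓ.continuous.measurable).aestronglyMeasurable
    (Eventually.of_forall fun z => ?_)
  rcases le_or_gt 1 ‖z‖ with hz | hz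
  · simp [singularKernel_of_one_le_norm hz]
  · rw [norm_mul]
    gcongr
    exact ℓ.le_of_opNorm_le_of_le le_rfl hz.le |>.trans_eq (mul_one _)

variable (μ) in
lemma aecover_lt_norm [Nontrivial E] : AECover μ (𝓝[>] (0 : ℝ)) fun ε => {z : E | ε < ‖z‖} where
  ae_eventually_mem := by
    filter_upwards [Measure.ae_ne μ (0 : E)] with z hz
    exact nhdsWithin_le_nhds (Iio_mem_nhds (norm_pos_iff.2 hz))
  measurableSet _ := measurableSet_lt measurable_const measurable_norm

end Integral

/-- `L` is the principal value `P.V. ∫ (u x - u y) / |x - y| ^ p dy`. For `p = d + 2σ` in dimension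
`d` this is the fractional Laplacian `(-Δ)^σ u x` up to a normalising constant. -/
def HasFracLaplacianAt {E : Type*} [PseudoMetricSpace E] [MeasurableSpace E] (μ : Measure E)
    (p : ℝ) (u : E → ℝ) (x : E) (L : ℝ) : Prop :=
  Tendsto (fun ε : ℝ => ∫ y in {y | ε < dist y x}, (u x - u y) / dist x y ^ p ∂μ) (𝓝[>] 0) (𝓝 L)

namespace HasFracLaplacianAt

lemma neg {E : Type*} [PseudoMetricSpace E] [MeasurableSpace E] {μ : Measure E} {p L : ℝ}
    {u : E → ℝ} {x : E} (h : HasFracLaplacianAt μ p u x L) :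
    HasFracLaplacianAt μ p (fun y => -u y) x (-L) := by
  refine (Tendsto.neg h).congr fun ε => ?_
  rw [← integral_neg]
  congr with y
  ring

variable {E : Type*} [NormedAddCommGroup E] [NormedSpace ℝ E] [FiniteDimensional ℝ E]
  [MeasurableSpace E] [BorelSpace E] {μ : Measure E} [μ.IsAddHaarMeasure] {p L : ℝ} {u : E → ℝ}
  {x : E}

lemma comp_add_smul (h : HasFracLaplacianAt μ p u x L) {r : ℝ} (hr : 0 < r) :
    HasFracLaplacianAt μ p (fun z => u (x + r • z)) 0 (r ^ (p - finrank ℝ E) * L) := by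
  have hscale : Tendsto (fun ε : ℝ => r * ε) (𝓝[>] 0) (𝓝[>] 0) := by
    refine tendsto_nhdsWithin_iff.2 ⟨?_, ?_⟩
    · exact (Continuous.tendsto' (by fun_prop) 0 0 (mul_zero r)).mono_left nhdsWithin_le_nhds
    · filter_upwards [self_mem_nhdsWithin] with ε hε using mul_pos hr hε
  refine ((Tendsto.comp h hscale).const_mul (r ^ (p - finrank ℝ E))).congr fun ε => ?_
  have hmeas (c : ℝ) (x₀ : E) : MeasurableSet {y | c < dist y x₀} :=
    measurableSet_lt measurable_const (measurable_id.dist measurable_const)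
  simp only [Function.comp_apply, ← integral_indicator (hmeas _ _)]
  rw [← pow_finrank_mul_integral_comp_add_smul μ _ x hr, ← mul_assoc, ← rpow_natCast,
    ← rpow_add hr, sub_add_cancel, ← integral_const_mul]
  congr with z
  simp only [indicator, mem_ofPred_eq, dist_zero_right, dist_zero_left, dist_self_add_left,
    dist_self_add_right, norm_smul, norm_of_nonneg hr.le, mul_lt_mul_iff_right₀ hr, smul_zero,
    add_zero]
  split_ifs
  · rw [mul_rpow hr.le (norm_nonneg z)]
    field_simp
  · exact mul_zero _

variable [Nontrivial E] {B : ℝ}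

lemma integral_le_of_quadratic_above_zero (hp : (finrank ℝ E : ℝ) < p)
    (hp2 : p < finrank ℝ E + 2) (hu : Integrable (fun z => truncKernel p z * u z) μ)
    (h : HasFracLaplacianAt μ p u 0 L) (hB : 0 ≤ B) (ℓ : E →L[ℝ] ℝ)
    (hq : ∀ z, ‖z‖ < 1 → u z - u 0 ≤ ℓ z + B * ‖z‖ ^ 2) :
    ∫ z, truncKernel p z * (u 0 - u z) ∂μ - B * ∫ z : E, singularKernel p z * ‖z‖ ^ 2 ∂μ ≤ L := by
  have hp0 : 0 ≤ p := (Nat.cast_nonneg _).trans hp.le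
  have hdiff : Integrable (fun z => truncKernel p z * (u 0 - u z)) μ := by
    simp only [mul_sub]
    exact ((integrable_truncKernel μ hp).mul_const _).sub hu
  refine le_of_tendsto_of_tendsto
    (((aecover_lt_norm μ).integral_tendsto_of_countably_generated hdiff).sub_const _) h ?_
  filter_upwards [self_mem_nhdsWithin] with ε (hε : 0 < ε)
  simp only [dist_zero_right, dist_zero_left]
  have hS : MeasurableSet {z : E | ε < ‖z‖} := measurableSet_lt measurable_const measurable_norm
  have hlin := integrableOn_singularKernel_mul_clm (μ := μ) hp ℓ hε
  have hquad := (integrable_singularKernel_mul_norm_sq μ hp0 hp2).integrableOn (s := {z | ε < ‖z‖})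
  have hcorr : IntegrableOn (fun z => singularKernel p z * ℓ z +
      B * (singularKernel p z * ‖z‖ ^ 2)) {z | ε < ‖z‖} μ := hlin.add (hquad.const_mul B)
  have hpv : IntegrableOn (fun z => (u 0 - u z) / ‖z‖ ^ p) {z | ε < ‖z‖} μ := by
    simpa only [div_eq_inv_mul, rpow_neg (norm_nonneg _)] using
      integrableOn_norm_rpow_neg_mul hp0 hdiff hε
  have hle : ∀ z ∈ {z : E | ε < ‖z‖}, truncKernel p z * (u 0 - u z) -
      (singularKernel p z * ℓ z + B * (singularKernel p z * ‖z‖ ^ 2)) ≤ (u 0 - u z) / ‖z‖ ^ p := by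
    intro z hz
    rw [div_eq_inv_mul, ← rpow_neg (norm_nonneg z)]
    have := truncKernel_mul_sub_singularKernel_mul_le hp0 (norm_pos_iff.1 (hε.trans hz))
      fun hz1 => (neg_sub (u 0) (u z)).trans_le (hq z hz1)
    linarith
  have hodd : ∫ z in {z : E | ε < ‖z‖}, singularKernel p z * ℓ z ∂μ = 0 :=
    setIntegral_eq_zero_of_odd μ hS (by simp) fun z => by
      rw [singularKernel_neg, map_neg, mul_neg]
  calc _ ≤ ∫ z in {z | ε < ‖z‖}, truncKernel p z * (u 0 - u z) ∂μ -
        B * ∫ z in {z : E | ε < ‖z‖}, singularKernel p z * ‖z‖ ^ 2 ∂μ :=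
        sub_le_sub_left (mul_le_mul_of_nonneg_left (setIntegral_le_integral
          (integrable_singularKernel_mul_norm_sq μ hp0 hp2)
          (Eventually.of_forall (singularKernel_mul_norm_sq_nonneg hp0))) hB) _
    _ = ∫ z in {z | ε < ‖z‖}, truncKernel p z * (u 0 - u z) -
        (singularKernel p z * ℓ z + B * (singularKernel p z * ‖z‖ ^ 2)) ∂μ := by
        rw [integral_sub hdiff.integrableOn hcorr, integral_add hlin (hquad.const_mul B), hodd,
          zero_add, integral_const_mul]
    _ ≤ _ := setIntegral_mono_on (hdiff.integrableOn.sub hcorr) hpv hS hle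

lemma integral_le_of_quadratic_above (hp : (finrank ℝ E : ℝ) < p) (hp2 : p < finrank ℝ E + 2)
    (hu : Integrable (fun z => truncKernel p z * u z) μ) (h : HasFracLaplacianAt μ p u x L)
    (hB : 0 ≤ B) (ℓ : E →L[ℝ] ℝ) {r : ℝ} (hr : 0 < r)
    (hq : ∀ z, ‖z‖ < r → u (x + z) - u x ≤ ℓ z + B * ‖z‖ ^ 2) :
    u x * ∫ z : E, truncKernel p z ∂μ - ∫ z, truncKernel p z * u (x + r • z) ∂μ -
      B * r ^ 2 * ∫ z : E, singularKernel p z * ‖z‖ ^ 2 ∂μ ≤ r ^ (p - finrank ℝ E) * L := by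
  have hp0 : 0 ≤ p := (Nat.cast_nonneg _).trans hp.le
  have hint := integrable_truncKernel_mul_comp_add_smul hp0 hu x hr
  have hquad : ∀ z, ‖z‖ < 1 → u (x + r • z) - u (x + r • (0 : E)) ≤
      (r • ℓ) z + B * r ^ 2 * ‖z‖ ^ 2 := fun z hz => by
    have hrz : ‖r • z‖ = r * ‖z‖ := by rw [norm_smul, norm_of_nonneg hr.le]
    have := hq (r • z) (hrz ▸ mul_lt_of_lt_one_right hr hz)
    simpa only [smul_zero, add_zero, map_smul, smul_apply, hrz, mul_pow, mul_assoc] using this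
  have hmain := integral_le_of_quadratic_above_zero hp hp2 hint (h.comp_add_smul hr)
    (by positivity) (r • ℓ) hquad
  simp only [smul_zero, add_zero, mul_sub] at hmain
  rwa [integral_sub ((integrable_truncKernel μ hp).mul_const _) hint, integral_mul_const,
    mul_comm _ (u x)] at hmain

end HasFracLaplacianAt

lemma one_le_one_sub_pow_mul (n : ℕ) {q : ℝ} (hq : |q| ≤ 1 / 2) :
    1 ≤ (1 - q) ^ n * (1 + n * q + 4 ^ n * q ^ 2) := by
  have hq' := abs_le.1 hq
  induction n with
  | zero => simpa using sq_nonneg q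
  | succ n ih =>
    have hn : (n + 1 : ℝ) ≤ 4 ^ n := by exact_mod_cast Nat.lt_pow_self (by norm_num : 1 < 4)
    refine ih.trans ?_
    rw [pow_succ (1 - q), mul_assoc]
    refine mul_le_mul_of_nonneg_left ?_ (pow_nonneg (by linarith) n)
    have hcoeff : 0 ≤ q ^ 2 * (4 ^ n * (2 - 4 * q) + (4 ^ n - (n + 1))) :=
      mul_nonneg (sq_nonneg q) (add_nonneg (mul_nonneg (by positivity) (by linarith))
        (by linarith))
    push_cast
    linear_combination hcoeff

section Barrier

variable {F : Type*} [SeminormedAddCommGroup F] {ρ : ℝ}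

lemma sub_norm_sq_pos {y : F} (hy : y ∈ ball 0 ρ) : 0 < ρ ^ 2 - ‖y‖ ^ 2 :=
  sub_pos.2 (pow_lt_pow_left₀ (mem_ball_zero_iff.1 hy) (norm_nonneg y) two_ne_zero)

lemma exists_isMaxOn_barrier [ProperSpace F] {u : F → ℝ} {d : ℕ} (hd : d ≠ 0)
    (hu : ContinuousOn u (closedBall 0 ρ)) {y : F} (hy : y ∈ ball 0 ρ) (huy : 0 < u y) :
    ∃ x ∈ ball (0 : F) ρ,
      IsMaxOn (fun y => u y * (ρ ^ 2 - ‖y‖ ^ 2) ^ d) (closedBall 0 ρ) x := by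
  obtain ⟨x, hxρ, hx⟩ := (isCompact_closedBall (0 : F) ρ).exists_isMaxOn
    (f := fun y => u y * (ρ ^ 2 - ‖y‖ ^ 2) ^ d) ⟨y, ball_subset_closedBall hy⟩
    (hu.mul (by fun_prop))
  refine ⟨x, mem_ball_zero_iff.2 ((mem_closedBall_zero_iff.1 hxρ).lt_of_ne fun hx_eq => ?_), hx⟩
  have hpos : 0 < u y * (ρ ^ 2 - ‖y‖ ^ 2) ^ d := mul_pos huy (pow_pos (sub_norm_sq_pos hy) d)
  have hle := isMaxOn_iff.1 hx y (ball_subset_closedBall hy)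
  simp only [hx_eq, sub_self, zero_pow hd, mul_zero] at hle
  exact hle.not_gt hpos

end Barrier

section Touching

variable {F : Type*} [NormedAddCommGroup F] [InnerProductSpace ℝ F] {ρ : ℝ} {u : F → ℝ}

lemma exists_paraboloid_touching_below [ProperSpace F] (hu : ContinuousOn u (closedBall 0 ρ))
    (hu0 : ∀ z, 0 ≤ u z) {s : ℝ} (hs : 0 ≤ s) {y : F} (hy : y ∈ closedBall 0 ρ)
    (hys : u y ≤ s * (ρ ^ 2 - ‖y‖ ^ 2)) :
    ∃ x ∈ closedBall (0 : F) ρ, u x ≤ s * ρ ^ 2 ∧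
      ∀ z, u x - u (x + z) ≤ 2 * s * inner ℝ x z + s * ‖z‖ ^ 2 := by
  obtain ⟨x, hxρ, hx⟩ := (isCompact_closedBall (0 : F) ρ).exists_isMinOn
    (f := fun x => u x - s * (ρ ^ 2 - ‖x‖ ^ 2)) ⟨y, hy⟩ (hu.sub (by fun_prop))
  have hx0 : u x - s * (ρ ^ 2 - ‖x‖ ^ 2) ≤ 0 := (isMinOn_iff.1 hx y hy).trans (by linarith)
  refine ⟨x, hxρ, by nlinarith [sq_nonneg ‖x‖], fun z => ?_⟩
  have hmin : u x - s * (ρ ^ 2 - ‖x‖ ^ 2) ≤ u (x + z) - s * (ρ ^ 2 - ‖x + z‖ ^ 2) := by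
    by_cases hz : x + z ∈ closedBall (0 : F) ρ
    · exact isMinOn_iff.1 hx _ hz
    · rw [mem_closedBall_zero_iff, not_le] at hz
      have hρ : 0 ≤ ρ := nonneg_of_mem_closedBall hy
      have : ρ ^ 2 ≤ ‖x + z‖ ^ 2 := by gcongr
      nlinarith [hu0 (x + z)]
  rw [norm_add_sq_real] at hmin
  linarith

lemma abs_two_mul_inner_add_norm_sq_le {x z : F} (hx : ‖x‖ ≤ ρ) (hz : ‖z‖ ≤ ρ) :
    |2 * inner ℝ x z + ‖z‖ ^ 2| ≤ 3 * ρ * ‖z‖ :=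
  calc |2 * inner ℝ x z + ‖z‖ ^ 2| ≤ 2 * |inner ℝ x z| + ‖z‖ * ‖z‖ := by
        refine (abs_add_le _ _).trans_eq ?_
        rw [abs_mul, abs_two, abs_of_nonneg (sq_nonneg ‖z‖), sq]
    _ ≤ 2 * (ρ * ‖z‖) + ρ * ‖z‖ := by
        gcongr
        exact (abs_real_inner_le_norm x z).trans (by gcongr)
    _ = 3 * ρ * ‖z‖ := by ring

lemma sub_le_quadratic_of_isMaxOn_barrier {d : ℕ} {x z : F} (hx : x ∈ ball 0 ρ) (hux : 0 ≤ u x)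
    (hmax : IsMaxOn (fun y => u y * (ρ ^ 2 - ‖y‖ ^ 2) ^ d) (closedBall 0 ρ) x)
    (hz : 6 * ρ * ‖z‖ ≤ ρ ^ 2 - ‖x‖ ^ 2) :
    u (x + z) - u x ≤ u x * (2 * d / (ρ ^ 2 - ‖x‖ ^ 2)) * inner ℝ x z +
      u x * ((d + 9 * 4 ^ d) * ρ ^ 2 / (ρ ^ 2 - ‖x‖ ^ 2) ^ 2) * ‖z‖ ^ 2 := by
  have hρ : 0 < ρ := pos_of_mem_ball hx
  have hh := sub_norm_sq_pos hx
  have hzρ : ‖z‖ ≤ ρ := by nlinarith [sq_nonneg ‖x‖]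
  have hhρ : ρ ^ 2 - ‖x‖ ^ 2 ≤ ρ ^ 2 := sub_le_self _ (sq_nonneg _)
  set h := ρ ^ 2 - ‖x‖ ^ 2 with h_def
  set q := (2 * inner ℝ x z + ‖z‖ ^ 2) / h with q_def
  have hq : |q| ≤ 3 * ρ * ‖z‖ / h := by
    rw [q_def, abs_div, abs_of_pos hh]
    gcongr
    exact abs_two_mul_inner_add_norm_sq_le (mem_ball_zero_iff.1 hx).le hzρ
  have hq_half : |q| ≤ 1 / 2 := hq.trans ((div_le_iff₀ hh).2 (by linarith))
  have hq1 : 0 < 1 - q := by linarith [le_abs_self q]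
  have hxz : ρ ^ 2 - ‖x + z‖ ^ 2 = h * (1 - q) := by
    rw [norm_add_sq_real, q_def, mul_sub, mul_div_cancel₀ _ hh.ne', h_def]
    ring
  have hxzρ : x + z ∈ closedBall (0 : F) ρ := by
    rw [mem_closedBall_zero_iff]
    exact le_of_sq_le_sq (sub_nonneg.1 (hxz ▸ (mul_pos hh hq1).le)) hρ.le
  have hbarrier : u (x + z) * (1 - q) ^ d ≤ u x := by
    have := isMaxOn_iff.1 hmax _ hxzρ
    rw [hxz, mul_pow, mul_left_comm, mul_comm (u x)] at this
    exact le_of_mul_le_mul_left this (by positivity)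
  have hexpand : u (x + z) ≤ u x * (1 + d * q + 4 ^ d * q ^ 2) := by
    refine le_of_mul_le_mul_right (hbarrier.trans ?_) (pow_pos hq1 d)
    rw [mul_assoc, mul_comm _ ((1 - q) ^ d)]
    exact le_mul_of_one_le_right hux (one_le_one_sub_pow_mul d hq_half)
  have hquad : d * q + 4 ^ d * q ^ 2 ≤
      2 * d / h * inner ℝ x z + (d + 9 * 4 ^ d) * ρ ^ 2 / h ^ 2 * ‖z‖ ^ 2 :=
    calc d * q + 4 ^ d * q ^ 2
        ≤ d * q + 4 ^ d * (3 * ρ * ‖z‖ / h) ^ 2 := by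
          gcongr d * q + 4 ^ d * ?_
          exact sq_le_sq' (abs_le.1 hq).1 (abs_le.1 hq).2
      _ = 2 * d / h * inner ℝ x z + (d * h + 9 * 4 ^ d * ρ ^ 2) / h ^ 2 * ‖z‖ ^ 2 := by
          rw [q_def]
          field_simp
          ring
      _ ≤ _ := by
          rw [add_mul]
          gcongr
  linear_combination hexpand + u x * hquad

end Touching

section Harnack

variable {E : Type*} [NormedAddCommGroup E] [InnerProductSpace ℝ E] [FiniteDimensional ℝ E]
  [MeasurableSpace E] [BorelSpace E] [Nontrivial E] (μ : Measure E) [μ.IsAddHaarMeasure]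
  {p ρ A : ℝ}

lemma exists_mul_integral_le_of_supersolution (hp : (finrank ℝ E : ℝ) < p)
    (hp2 : p < finrank ℝ E + 2) (hρ : 0 < ρ) (hA : 0 ≤ A) :
    ∃ C > 0, ∀ u : E → ℝ, ContinuousOn u (closedBall 0 ρ) → (∀ x, 0 ≤ u x) →
      Integrable (fun y => truncKernel p y * u y) μ →
      (∀ x ∈ closedBall 0 ρ, ∃ L ≥ -(A * u x), HasFracLaplacianAt μ p u x L) →
      ∀ y ∈ ball 0 ρ, (ρ ^ 2 - ‖y‖ ^ 2) * ∫ z, truncKernel p z * u z ∂μ ≤ C * u y := by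
  have hp0 : 0 ≤ p := (Nat.cast_nonneg _).trans hp.le
  set K := ∫ z : E, truncKernel p z ∂μ
  have hK : 0 < K := integral_truncKernel_pos μ hp
  set Q := ∫ z : E, singularKernel p z * ‖z‖ ^ 2 ∂μ
  have hQ : 0 ≤ Q := integral_nonneg (singularKernel_mul_norm_sq_nonneg hp0)
  refine ⟨(2 + ρ) ^ p * (Q + (K + A) * ρ ^ 2), by positivity, fun u hu hu0 hint hL y hy => ?_⟩
  have hh := sub_norm_sq_pos hy
  set s := u y / (ρ ^ 2 - ‖y‖ ^ 2)
  have hs : 0 ≤ s := div_nonneg (hu0 y) hh.le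
  have hsy : s * (ρ ^ 2 - ‖y‖ ^ 2) = u y := div_mul_cancel₀ _ hh.ne'
  obtain ⟨x, hx, hux, htouch⟩ := exists_paraboloid_touching_below hu hu0 hs
    (ball_subset_closedBall hy) hsy.ge
  obtain ⟨L, hLx, hpv⟩ := hL x hx
  have hneg : Integrable (fun z => truncKernel p z * -u z) μ := by
    simp only [mul_neg]
    exact hint.neg
  have hmean : ∫ z, truncKernel p z * u (x + z) ∂μ ≤ s * Q + (K + A) * u x := by
    have := hpv.neg.integral_le_of_quadratic_above hp hp2 hneg hs ((2 * s) • innerSL ℝ x) one_pos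
      fun z _ => by
        simp only [smul_apply, innerSL_apply_apply, smul_eq_mul]
        linarith [htouch z]
    simp only [one_smul, one_pow, one_rpow, one_mul, mul_one, mul_neg, integral_neg] at this
    linarith
  have hI : ∫ z, truncKernel p z * u z ∂μ ≤ (2 + ρ) ^ p * (s * (Q + (K + A) * ρ ^ 2)) :=
    calc ∫ z, truncKernel p z * u z ∂μ
        ≤ (2 + ‖x‖) ^ p * ∫ z, truncKernel p z * u (x + z) ∂μ :=
          integral_truncKernel_mul_le_comp_add hp0 hint hu0 x
      _ ≤ (2 + ρ) ^ p * (s * Q + (K + A) * (s * ρ ^ 2)) := by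
          have := mem_closedBall_zero_iff.1 hx
          gcongr
          · exact integral_nonneg fun z => mul_nonneg (truncKernel_pos z).le (hu0 _)
          · exact hmean.trans (by gcongr)
      _ = _ := by ring
  calc (ρ ^ 2 - ‖y‖ ^ 2) * ∫ z, truncKernel p z * u z ∂μ
      ≤ (ρ ^ 2 - ‖y‖ ^ 2) * ((2 + ρ) ^ p * (s * (Q + (K + A) * ρ ^ 2))) := by gcongr
    _ = _ := by rw [← hsy]; ring

lemma exists_scale (a b M t : ℝ) {c γ : ℝ} (hc : 0 < c) (hγ : 0 < γ) :
    ∃ θ > 0, t * θ ≤ 1 ∧ a * θ ^ 2 + b * (θ * M) ^ γ ≤ c := by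
  have hcont : Continuous fun θ : ℝ => a * θ ^ 2 + b * (θ * M) ^ γ := by
    have : Continuous fun θ : ℝ => (θ * M) ^ γ :=
      (continuous_mul_const M).rpow_const fun _ => Or.inr hγ.le
    fun_prop
  have hsmall : ∀ᶠ θ in 𝓝[>] (0 : ℝ), a * θ ^ 2 + b * (θ * M) ^ γ < c :=
    nhdsWithin_le_nhds <| hcont.continuousAt.eventually_lt continuousAt_const
      (by simpa [zero_rpow hγ.ne'] using hc)
  have hunit : ∀ᶠ θ in 𝓝[>] (0 : ℝ), t * θ < 1 :=
    nhdsWithin_le_nhds <| (continuous_const_mul t).continuousAt.eventually_lt continuousAt_const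
      (by simp)
  obtain ⟨θ, ⟨hθs, hθt⟩, hθ⟩ := ((hsmall.and hunit).and self_mem_nhdsWithin).exists
  exact ⟨θ, hθ, hθt.le, hθs.le⟩

lemma half_mul_le_integral_of_isMaxOn_barrier (hp : (finrank ℝ E : ℝ) < p)
    (hp2 : p < finrank ℝ E + 2) (hA : 0 ≤ A) {θ : ℝ} (hθ : 0 < θ) (hθρ : 6 * ρ * θ ≤ 1)
    (hsmall : (finrank ℝ E + 9 * 4 ^ finrank ℝ E) * ρ ^ 2 *
        (∫ z : E, singularKernel p z * ‖z‖ ^ 2 ∂μ) * θ ^ 2 +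
      A * (θ * ρ ^ 2) ^ (p - finrank ℝ E) ≤ (∫ z : E, truncKernel p z ∂μ) / 2)
    {u : E → ℝ} (hint : Integrable (fun y => truncKernel p y * u y) μ) {x : E}
    (hx : x ∈ ball 0 ρ) (hux : 0 ≤ u x) {L : ℝ} (hL : L ≤ A * u x)
    (hpv : HasFracLaplacianAt μ p u x L)
    (hmax : IsMaxOn (fun y => u y * (ρ ^ 2 - ‖y‖ ^ 2) ^ finrank ℝ E) (closedBall 0 ρ) x) :
    (∫ z : E, truncKernel p z ∂μ) / 2 * u x ≤
      ∫ z, truncKernel p z * u (x + (θ * (ρ ^ 2 - ‖x‖ ^ 2)) • z) ∂μ := by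
  have hρ : 0 < ρ := pos_of_mem_ball hx
  have hh := sub_norm_sq_pos hx
  have hhρ : ρ ^ 2 - ‖x‖ ^ 2 ≤ ρ ^ 2 := sub_le_self _ (sq_nonneg _)
  set d := finrank ℝ E
  set h := ρ ^ 2 - ‖x‖ ^ 2
  set D := (d + 9 * 4 ^ d) * ρ ^ 2
  have hr : 0 < θ * h := mul_pos hθ hh
  have hmean := hpv.integral_le_of_quadratic_above hp hp2 hint (B := u x * (D / h ^ 2))
    (by positivity) ((u x * (2 * d / h)) • innerSL ℝ x) hr fun z hz => by
      simp only [smul_apply, innerSL_apply_apply, smul_eq_mul]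
      exact sub_le_quadratic_of_isMaxOn_barrier hx hux hmax (by nlinarith)
  have hscale : u x * (D / h ^ 2) * (θ * h) ^ 2 = u x * (D * θ ^ 2) := by field_simp
  have hlower : (θ * h) ^ (p - d) * L ≤ (θ * ρ ^ 2) ^ (p - d) * (A * u x) := by
    refine (mul_le_mul_of_nonneg_left hL (by positivity)).trans ?_
    gcongr
  rw [hscale] at hmean
  linear_combination hmean + hlower + u x * hsmall

lemma exists_pow_mul_le_integral_of_subsolution (hp : (finrank ℝ E : ℝ) < p)
    (hp2 : p < finrank ℝ E + 2) (hρ : 0 < ρ) (hA : 0 ≤ A) :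
    ∃ C > 0, ∀ u : E → ℝ, ContinuousOn u (closedBall 0 ρ) → (∀ x, 0 ≤ u x) →
      Integrable (fun y => truncKernel p y * u y) μ →
      (∀ x ∈ ball 0 ρ, ∃ L ≤ A * u x, HasFracLaplacianAt μ p u x L) →
      ∀ y ∈ ball 0 ρ, (ρ ^ 2 - ‖y‖ ^ 2) ^ finrank ℝ E * u y ≤
        C * ∫ z, truncKernel p z * u z ∂μ := by
  have hp0 : 0 ≤ p := (Nat.cast_nonneg _).trans hp.le
  have hK : 0 < ∫ z : E, truncKernel p z ∂μ := integral_truncKernel_pos μ hp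
  obtain ⟨θ, hθ, hθρ, hsmall⟩ := exists_scale ((finrank ℝ E + 9 * 4 ^ finrank ℝ E) * ρ ^ 2 *
    ∫ z : E, singularKernel p z * ‖z‖ ^ 2 ∂μ) A (ρ ^ 2) (6 * ρ) (half_pos hK)
    (sub_pos.2 hp)
  set d := finrank ℝ E 
  set K := ∫ z : E, truncKernel p z ∂μ
  refine ⟨(1 + 2 * ρ) ^ p / (K / 2 * θ ^ d), by positivity, fun u hu hu0 hint hL y hy => ?_⟩
  set I := ∫ z, truncKernel p z * u z ∂μ
  have hI : 0 ≤ I := integral_nonneg fun z => mul_nonneg (truncKernel_pos z).le (hu0 z)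
  rcases (hu0 y).eq_or_lt with huy | huy
  · rw [← huy, mul_zero]
    positivity
  obtain ⟨x, hx, hmax⟩ := exists_isMaxOn_barrier (d := d) finrank_pos.ne' hu hy huy
  obtain ⟨L, hLx, hpv⟩ := hL x hx
  have hh := sub_norm_sq_pos hx
  have hxρ := mem_ball_zero_iff.1 hx
  have hmean := half_mul_le_integral_of_isMaxOn_barrier μ hp hp2 hA hθ hθρ hsmall hint hx (hu0 x)
    hLx hpv hmax
  have hr : 0 < θ * (ρ ^ 2 - ‖x‖ ^ 2) := mul_pos hθ hh
  have hrρ : θ * (ρ ^ 2 - ‖x‖ ^ 2) ≤ ρ := by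
    nlinarith [mul_nonneg hθ.le (sq_nonneg ‖x‖)]
  rw [div_mul_eq_mul_div, le_div_iff₀ (by positivity)]
  calc (ρ ^ 2 - ‖y‖ ^ 2) ^ d * u y * (K / 2 * θ ^ d)
      = u y * (ρ ^ 2 - ‖y‖ ^ 2) ^ d * (K / 2 * θ ^ d) := by ring
    _ ≤ u x * (ρ ^ 2 - ‖x‖ ^ 2) ^ d * (K / 2 * θ ^ d) := by
        gcongr ?_ * _
        exact isMaxOn_iff.1 hmax y (ball_subset_closedBall hy)
    _ = (θ * (ρ ^ 2 - ‖x‖ ^ 2)) ^ d * (K / 2 * u x) := by rw [mul_pow θ]; ring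
    _ ≤ (θ * (ρ ^ 2 - ‖x‖ ^ 2)) ^ d *
        ∫ z, truncKernel p z * u (x + (θ * (ρ ^ 2 - ‖x‖ ^ 2)) • z) ∂μ := by gcongr
    _ ≤ (1 + ‖x‖ + θ * (ρ ^ 2 - ‖x‖ ^ 2)) ^ p * I :=
        pow_mul_integral_truncKernel_mul_comp_add_smul_le hp0 hint hu0 x hr
    _ ≤ (1 + 2 * ρ) ^ p * I := by
        gcongr ?_ ^ p * I
        linarith

lemma exists_harnack_on_ball (hp : (finrank ℝ E : ℝ) < p) (hp2 : p < finrank ℝ E + 2)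
    (hρ : 0 < ρ) (hA : 0 ≤ A) :
    ∃ C > 0, ∀ u : E → ℝ, ContinuousOn u (closedBall 0 ρ) → (∀ x, 0 ≤ u x) →
      Integrable (fun y => truncKernel p y * u y) μ →
      (∀ x ∈ closedBall 0 ρ, ∃ L, |L| ≤ A * u x ∧ HasFracLaplacianAt μ p u x L) →
      ∀ x ∈ ball 0 ρ, ∀ y ∈ ball 0 ρ,
        (ρ ^ 2 - ‖x‖ ^ 2) ^ finrank ℝ E * (ρ ^ 2 - ‖y‖ ^ 2) * u x ≤ C * u y := by
  obtain ⟨C, hC, hsuper⟩ := exists_mul_integral_le_of_supersolution μ hp hp2 hρ hA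
  obtain ⟨C', hC', hsub⟩ := exists_pow_mul_le_integral_of_subsolution μ hp hp2 hρ hA
  refine ⟨C' * C, by positivity, fun u hu hu0 hint hL x hx y hy => ?_⟩
  have hupper := hsub u hu hu0 hint (fun x hx =>
    (hL x (ball_subset_closedBall hx)).imp fun L h => ⟨(abs_le.1 h.1).2, h.2⟩) x hx
  have hlower := hsuper u hu hu0 hint (fun x hx =>
    (hL x hx).imp fun L h => ⟨(abs_le.1 h.1).1, h.2⟩) y hy
  linear_combination mul_le_mul_of_nonneg_left hupper (sub_norm_sq_pos hy).le + C' * hlower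

end Harnack

end FractionalHarnack

open FractionalHarnack in
theorem fractional_harnack_pv_general {E : Type*} [NormedAddCommGroup E] [InnerProductSpace ℝ E]
    [FiniteDimensional ℝ E] [MeasurableSpace E] [BorelSpace E] [Nontrivial E] (μ : Measure E)
    [μ.IsAddHaarMeasure] {p R δ : ℝ} (hp : (Module.finrank ℝ E : ℝ) < p)
    (hp2 : p < Module.finrank ℝ E + 2) (hδ0 : 0 < δ) (hδR : δ < R) (Ma : ℝ) :
    ∃ C > 0, ∀ u a : E → ℝ, ContinuousOn u (ball 0 R) → (∀ x, 0 ≤ u x) →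
      Integrable (fun y => truncKernel p y * u y) μ → (∀ x ∈ ball 0 R, |a x| ≤ Ma) →
      (∀ x ∈ ball 0 R, HasFracLaplacianAt μ p u x (a x * u x)) →
      ∀ x ∈ closedBall 0 (R - δ), ∀ y ∈ closedBall 0 (R - δ), u x ≤ C * u y := by
  set ρ := R - δ / 2 with hρ
  set κ := ρ ^ 2 - (R - δ) ^ 2
  have hκ0 : 0 < κ := by nlinarith
  obtain ⟨C, hC, hharnack⟩ := exists_harnack_on_ball μ hp hp2 (by linarith : 0 < ρ) (abs_nonneg Ma)
  refine ⟨C / (κ ^ Module.finrank ℝ E * κ), by positivity,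
    fun u a hu hu0 hint ha hL x hx y hy => ?_⟩
  have hball : closedBall (0 : E) ρ ⊆ ball 0 R := closedBall_subset_ball (by linarith)
  have hinner : closedBall (0 : E) (R - δ) ⊆ ball 0 ρ := closedBall_subset_ball (by linarith)
  have hκ_le : ∀ z ∈ closedBall (0 : E) (R - δ), κ ≤ ρ ^ 2 - ‖z‖ ^ 2 := fun z hz =>
    sub_le_sub_left (pow_le_pow_left₀ (norm_nonneg z) (mem_closedBall_zero_iff.1 hz) 2) _
  have hbound : ∀ x ∈ closedBall (0 : E) ρ, |a x * u x| ≤ |Ma| * u x := fun x hx => by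
    rw [abs_mul, abs_of_nonneg (hu0 x)]
    exact mul_le_mul_of_nonneg_right ((ha x (hball hx)).trans (le_abs_self _)) (hu0 x)
  rw [div_mul_eq_mul_div, le_div_iff₀' (by positivity)]
  calc κ ^ Module.finrank ℝ E * κ * u x
      ≤ (ρ ^ 2 - ‖x‖ ^ 2) ^ Module.finrank ℝ E * (ρ ^ 2 - ‖y‖ ^ 2) * u x := by
        have hκx := hκ_le x hx
        have hκy := hκ_le y hy
        have := hu0 x
        gcongr
        exact pow_nonneg (hκ0.le.trans hκx) _
    _ ≤ C * u y := hharnack u (hu.mono hball) hu0 hint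
        (fun x hx => ⟨_, hbound x hx, hL x (hball hx)⟩) x (hinner hx) y (hinner hy)

/-- **Harnack inequality for `(−Δ)^σ u = a(x) u`** (Theorem 3.3): if `u ≥ 0` is
continuous and bounded on `ℝⁿ`, `C²` on `B_R`, `a` is bounded measurable, and for
every `x ∈ B_R` the principal value
`lim_{ε→0⁺} ∫_{|y−x|>ε} (u(x) − u(y))/|x−y|^{n+2σ} dy` exists and equals
`a(x)u(x)`, then `max_{B̄_{R−δ}} u ≤ C min_{B̄_{R−δ}} u`, with `C` depending only
on `n, σ, δ, R, ‖a‖_{L^∞(ℝⁿ)}`. -/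
theorem fractional_harnack_pv (n : ℕ) (σ : ℝ) (hσ0 : 0 < σ) (hσ1 : σ < 1)
    (hn : 2 * σ < n) (R : ℝ) (hR : 0 < R) (δ : ℝ) (hδ0 : 0 < δ) (hδR : δ < R)
    (Ma : ℝ) :
    ∃ C > 0, ∀ (u a : EuclideanSpace ℝ (Fin n) → ℝ) (M : ℝ),
      Continuous u → (∀ x, |u x| ≤ M) → (∀ x, 0 ≤ u x) →
      ContDiffOn ℝ 2 u (ball (0 : EuclideanSpace ℝ (Fin n)) R) →
      Measurable a → (∀ x, |a x| ≤ Ma) →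
      (∀ x ∈ ball (0 : EuclideanSpace ℝ (Fin n)) R,
        Filter.Tendsto (fun ε : ℝ =>
            ∫ y in {y : EuclideanSpace ℝ (Fin n) | ε < dist y x},
              (u x - u y) / (dist x y) ^ ((n : ℝ) + 2 * σ))
          (nhdsWithin 0 (Ioi 0)) (nhds (a x * u x))) →
      ∀ x ∈ closedBall (0 : EuclideanSpace ℝ (Fin n)) (R - δ),
        ∀ y ∈ closedBall (0 : EuclideanSpace ℝ (Fin n)) (R - δ),
          u x ≤ C * u y := by
  have hdim := finrank_euclideanSpace_fin (𝕜 := ℝ) (n := n)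
  have hn0 : 0 < n := by exact_mod_cast (by linarith : (0 : ℝ) < n)
  have := Module.nontrivial_of_finrank_pos (hn0.trans_eq hdim.symm)
  have hp : (Module.finrank ℝ (EuclideanSpace ℝ (Fin n)) : ℝ) < n + 2 * σ := by
    rw [hdim]
    linarith
  obtain ⟨C, hC, hharnack⟩ := fractional_harnack_pv_general
    (volume : Measure (EuclideanSpace ℝ (Fin n))) hp (by rw [hdim]; linarith) hδ0 hδR Ma
  refine ⟨C, hC, fun u a M hu hM hu0 _ _ ha hL => hharnack u a hu.continuousOn hu0 ?_
    (fun x _ => ha x) hL⟩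
  exact (FractionalHarnack.integrable_truncKernel volume hp).mul_bdd hu.aestronglyMeasurable
    (Filter.Eventually.of_forall hM)
end
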